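/- arXiv:math/0210227 — 4 statements merged into one kernel-verified Lean document; each statement's English description precedes it below -/
import Mathlib

section
/- Let n ≥ 1 and let w : ℝ × ℝⁿ → ℝ be a C² function. Write r = |x|, let ∇w denote the spatial gradient of w, and define N(w) = 4t(x·∇w) + 2(r²+t²)∂_t w + 2(n−1)t w, the ℝⁿ-valued field p = −2t(∂_t w)² x − 4t(x·∇w)∇w + 2t|∇w|² x − 2(r²+t²)(∂_t w)∇w − 2(n−1)t w ∇w, and the scalar q = 4t(x·∇w)∂_t w + (r²+t²)(|∇w|² + (∂_t w)²) + 2(n−1)t w ∂_t w − (n−1)w². Then at every point (t,x) ∈ ℝ × ℝⁿ one has the Morawetz multiplier identity div_x p + ∂_t q = N(w)·(∂_t² w − Δ_x w). -/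
/-! The identity is pointwise and follows from the product rule together with the symmetry of second
derivatives. Write `v = ∂_t w`, `X = x·∇w`, `g = |∇w|²`, and let `H` be the spatial Hessian of `w`.
In `div_x p + ∂_t q` the terms carrying `∂_t v` or `Δ_x w` assemble to
`N(w) (∂_t² w − Δ_x w)`. Everything else cancels:

* `−4t ∇X·∇w = −4t g − 4t H(x, ∇w)` and `2t x·∇g = 4t H(x, ∇w)`, so the Hessian terms disappear;
* the mixed terms `x·∇v` and `∇v·∇w` of `div_x p` and of `∂_t q` are opposite, because
  `∂_t ∂_j w = ∂_j ∂_t w`;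
* the coefficients of `v²` and `g` add up to `2t + 2(n−1)t − 2nt = 0` and
  `2t − 4t + 2nt − 2(n−1)t = 0`.

All first derivatives are encoded as values of the full space-time derivative of
`(t, x) ↦ w t x` (`dW`), which is `C¹`; the component functions of `p` and the density `q` are then
differentiated along lines (`fderiv_Pfield`, `deriv_Qdens`), and
`coordinate_identity` is the remaining algebra of finite sums. -/


noncomputable section
open MeasureTheory Real
open scoped RealInnerProductSpace BigOperators

abbrev Euc (n : ℕ) := EuclideanSpace ℝ (Fin n)

/-- Time derivative `∂_t w`. -/
def pt {n : ℕ} (w : ℝ → Euc n → ℝ) (t : ℝ) (x : Euc n) : ℝ :=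
  deriv (fun s => w s x) t

/-- Spatial partial derivative `∂_{x_j} f`. -/
def pj {n : ℕ} (f : Euc n → ℝ) (x : Euc n) (j : Fin n) : ℝ :=
  fderiv ℝ f x (EuclideanSpace.single j 1)

/-- Spatial Laplacian `Δ_x f = ∑_j ∂²_{x_j} f`. -/
def lap {n : ℕ} (f : Euc n → ℝ) (x : Euc n) : ℝ :=
  ∑ j, pj (fun y => pj f y j) x j

/-- The Morawetz multiplier `N(w) = 4t(x·∇w) + 2(r²+t²)∂_t w + 2(n−1)t w`. -/
def Nmult {n : ℕ} (w : ℝ → Euc n → ℝ) (t : ℝ) (x : Euc n) : ℝ :=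
  4 * t * ⟪x, gradient (w t) x⟫ + 2 * (‖x‖ ^ 2 + t ^ 2) * pt w t x
    + 2 * ((n : ℝ) - 1) * t * w t x

/-- The vector field `p`. -/
def Pfield {n : ℕ} (w : ℝ → Euc n → ℝ) (t : ℝ) (x : Euc n) : Euc n :=
  (-(2 * t * (pt w t x) ^ 2)) • x
    - (4 * t * ⟪x, gradient (w t) x⟫) • gradient (w t) x
    + (2 * t * ‖gradient (w t) x‖ ^ 2) • x
    - (2 * (‖x‖ ^ 2 + t ^ 2) * pt w t x) • gradient (w t) x
    - (2 * ((n : ℝ) - 1) * t * w t x) • gradient (w t) x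

/-- The scalar density `q`. -/
def Qdens {n : ℕ} (w : ℝ → Euc n → ℝ) (t : ℝ) (x : Euc n) : ℝ :=
  4 * t * ⟪x, gradient (w t) x⟫ * pt w t x
    + (‖x‖ ^ 2 + t ^ 2) * (‖gradient (w t) x‖ ^ 2 + (pt w t x) ^ 2)
    + 2 * ((n : ℝ) - 1) * t * (w t x) * pt w t x
    - ((n : ℝ) - 1) * (w t x) ^ 2


/-- The derivative of `(t, x) ↦ w t x` in the space-time direction `u`, as a function of the
space-time point. -/
def dW {n : ℕ} (w : ℝ → Euc n → ℝ) (u : ℝ × Euc n) (p : ℝ × Euc n) : ℝ :=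
  fderiv ℝ (fun p : ℝ × Euc n => w p.1 p.2) p u

/-- The spatial coordinate direction `∂_{x_j}` in space-time. -/
abbrev sdir {n : ℕ} (j : Fin n) : ℝ × Euc n := (0, EuclideanSpace.single j 1)

/-- The time direction `∂_t` in space-time. -/
abbrev tdir {n : ℕ} : ℝ × Euc n := (1, 0)

lemma hasDerivAt_space {n : ℕ} {F : ℝ × Euc n → ℝ} (hF : Differentiable ℝ F)
    (t : ℝ) (x : Euc n) (j : Fin n) :
    HasDerivAt (fun s : ℝ => F (t, x + s • EuclideanSpace.single j 1))
      (fderiv ℝ F (t, x) (sdir j)) 0 := by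
  have h := (hF (t, x)).hasFDerivAt.hasLineDerivAt (sdir j)
  simpa [HasLineDerivAt] using h

lemma hasDerivAt_time {n : ℕ} {F : ℝ × Euc n → ℝ} (hF : Differentiable ℝ F)
    (t : ℝ) (x : Euc n) :
    HasDerivAt (fun s : ℝ => F (s, x)) (fderiv ℝ F (t, x) tdir) t :=
  (hF (t, x)).hasFDerivAt.comp_hasDerivAt t ((hasDerivAt_id t).prodMk (hasDerivAt_const t x))

lemma pj_slice {n : ℕ} {F : ℝ × Euc n → ℝ} (hF : Differentiable ℝ F)
    (t : ℝ) (x : Euc n) (j : Fin n) :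
    pj (fun y => F (t, y)) x j = fderiv ℝ F (t, x) (sdir j) := by
  have hd : DifferentiableAt ℝ (fun y => F (t, y)) x := by fun_prop
  rw [pj, ← hd.lineDeriv_eq_fderiv]
  exact (hasDerivAt_space hF t x j).deriv

lemma gradient_apply {n : ℕ} {f : Euc n → ℝ} (x : Euc n) (j : Fin n) :
    gradient f x j = pj f x j := by
  have h : ⟪gradient f x, EuclideanSpace.single j 1⟫ = pj f x j := by
    simp [gradient, pj]
  rw [← h, EuclideanSpace.inner_single_right]
  simp

section C2

variable {n : ℕ} {w : ℝ → Euc n → ℝ} (hw : ContDiff ℝ 2 (fun p : ℝ × Euc n => w p.1 p.2))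
include hw

lemma differentiable_dW (u : ℝ × Euc n) : Differentiable ℝ (dW w u) := by
  have h : ContDiff ℝ 1 (dW w u) :=
    (hw.fderiv_right (m := 1) (by norm_num)).clm_apply contDiff_const
  exact h.differentiable (by norm_num)

/-- Second derivatives of `w` in two space-time directions commute. -/
lemma dW_symm (u v p : ℝ × Euc n) : fderiv ℝ (dW w u) p v = fderiv ℝ (dW w v) p u := by
  have h2 : DifferentiableAt ℝ (fderiv ℝ (fun p : ℝ × Euc n => w p.1 p.2)) p :=
    ((hw.fderiv_right (m := 1) (by norm_num)).differentiable (by norm_num)) p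
  have key : ∀ a b : ℝ × Euc n, fderiv ℝ (dW w a) p b
      = fderiv ℝ (fderiv ℝ (fun p : ℝ × Euc n => w p.1 p.2)) p b a := by
    intro a b
    have := h2.hasFDerivAt.clm_apply (hasFDerivAt_const a p)
    have h3 : HasFDerivAt (dW w a) _ p := this
    rw [h3.fderiv]
    simp
  have hs : IsSymmSndFDerivAt ℝ (fun p : ℝ × Euc n => w p.1 p.2) p :=
    hw.contDiffAt.isSymmSndFDerivAt (by simp)
  rw [key, key, hs.eq]

lemma pt_eq (t : ℝ) (x : Euc n) : pt w t x = dW w tdir (t, x) :=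
  (hasDerivAt_time (hw.differentiable (by norm_num)) t x).deriv

lemma pj_eq (t : ℝ) (x : Euc n) (j : Fin n) : pj (w t) x j = dW w (sdir j) (t, x) :=
  pj_slice (hw.differentiable (by norm_num)) t x j

lemma pt_pt_eq (t : ℝ) (x : Euc n) : pt (pt w) t x = fderiv ℝ (dW w tdir) (t, x) tdir := by
  rw [pt]
  simp_rw [pt_eq hw]
  exact (hasDerivAt_time (differentiable_dW hw _) t x).deriv

lemma lap_eq (t : ℝ) (x : Euc n) :
    lap (w t) x = ∑ j, fderiv ℝ (dW w (sdir j)) (t, x) (sdir j) := by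
  simp_rw [lap, pj_eq hw]
  exact Finset.sum_congr rfl fun j _ => pj_slice (differentiable_dW hw _) t x j

lemma inner_gradient_eq (t : ℝ) (x : Euc n) :
    ⟪x, gradient (w t) x⟫ = ∑ k, x k * dW w (sdir k) (t, x) := by
  rw [PiLp.inner_apply]
  simp [gradient_apply, pj_eq hw, mul_comm]

lemma norm_gradient_sq (t : ℝ) (x : Euc n) :
    ‖gradient (w t) x‖ ^ 2 = ∑ k, dW w (sdir k) (t, x) ^ 2 := by
  simp [EuclideanSpace.norm_sq_eq, gradient_apply, pj_eq hw]

lemma Pfield_apply (t : ℝ) (y : Euc n) (j : Fin n) :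
    Pfield w t y j =
      -(2 * t * dW w tdir (t, y) ^ 2) * y j
      - (4 * t * ∑ k, y k * dW w (sdir k) (t, y)) * dW w (sdir j) (t, y)
      + (2 * t * ∑ k, dW w (sdir k) (t, y) ^ 2) * y j
      - (2 * ((∑ k, y k ^ 2) + t ^ 2) * dW w tdir (t, y)) * dW w (sdir j) (t, y)
      - (2 * ((n : ℝ) - 1) * t * w t y) * dW w (sdir j) (t, y) := by
  simp [Pfield, pt_eq hw, inner_gradient_eq hw, norm_gradient_sq hw, gradient_apply, pj_eq hw,
    EuclideanSpace.norm_sq_eq]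

lemma Qdens_eq (t : ℝ) (x : Euc n) :
    Qdens w t x =
      4 * t * (∑ k, x k * dW w (sdir k) (t, x)) * dW w tdir (t, x)
      + ((∑ k, x k ^ 2) + t ^ 2) * ((∑ k, dW w (sdir k) (t, x) ^ 2) + dW w tdir (t, x) ^ 2)
      + 2 * ((n : ℝ) - 1) * t * w t x * dW w tdir (t, x)
      - ((n : ℝ) - 1) * w t x ^ 2 := by
  simp [Qdens, pt_eq hw, inner_gradient_eq hw, norm_gradient_sq hw, EuclideanSpace.norm_sq_eq]

/-- The product rule for `∂_{x_j} p_j`, with the first derivatives of `w` denoted by `dW` and the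
second ones by `fderiv` of `dW`. -/
lemma fderiv_Pfield (t : ℝ) (x : Euc n) (j : Fin n) :
    fderiv ℝ (fun y => Pfield w t y j) x (EuclideanSpace.single j 1) =
      -(4 * t * dW w tdir (t, x) * fderiv ℝ (dW w tdir) (t, x) (sdir j)) * x j
      - 2 * t * dW w tdir (t, x) ^ 2
      - 4 * t * (dW w (sdir j) (t, x)
          + ∑ k, x k * fderiv ℝ (dW w (sdir k)) (t, x) (sdir j)) * dW w (sdir j) (t, x)
      - 4 * t * (∑ k, x k * dW w (sdir k) (t, x)) * fderiv ℝ (dW w (sdir j)) (t, x) (sdir j)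
      + 4 * t * (∑ k, dW w (sdir k) (t, x) * fderiv ℝ (dW w (sdir k)) (t, x) (sdir j)) * x j
      + 2 * t * (∑ k, dW w (sdir k) (t, x) ^ 2)
      - 4 * x j * dW w tdir (t, x) * dW w (sdir j) (t, x)
      - 2 * ((∑ k, x k ^ 2) + t ^ 2) * (fderiv ℝ (dW w tdir) (t, x) (sdir j)
          * dW w (sdir j) (t, x)
          + dW w tdir (t, x) * fderiv ℝ (dW w (sdir j)) (t, x) (sdir j))
      - 2 * ((n : ℝ) - 1) * t * (dW w (sdir j) (t, x) ^ 2
          + w t x * fderiv ℝ (dW w (sdir j)) (t, x) (sdir j)) := by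
  have hW : Differentiable ℝ (fun p : ℝ × Euc n => w p.1 p.2) := hw.differentiable (by norm_num)
  have hd := differentiable_dW hw
  have hdiff : DifferentiableAt ℝ (fun y => Pfield w t y j) x := by
    simp_rw [Pfield_apply hw]
    have h1 : ∀ u, Differentiable ℝ (fun y => dW w u (t, y)) := fun u =>
      (hd u).comp (by fun_prop)
    have h2 : Differentiable ℝ (fun y => w t y) := hW.comp (g := fun p : ℝ × Euc n => w p.1 p.2)
      (f := fun y => (t, y)) (by fun_prop)
    fun_prop
  rw [← hdiff.lineDeriv_eq_fderiv, lineDeriv]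
  simp_rw [Pfield_apply hw]
  have ha := fun k => hasDerivAt_space (hd (sdir k)) t x j
  have hv := hasDerivAt_space (hd tdir) t x j
  have h0 := hasDerivAt_space hW t x j
  have hx : ∀ k, HasDerivAt (fun s : ℝ => (x + s • EuclideanSpace.single j (1 : ℝ) : Euc n) k)
      (if k = j then 1 else 0) 0 := by
    intro k
    have := ((hasDerivAt_id (0 : ℝ)).mul_const (if k = j then (1 : ℝ) else 0)).const_add (x k)
    simpa [Pi.single_apply] using this
  have hX := HasDerivAt.fun_sum (u := Finset.univ) fun k _ => (hx k).fun_mul (ha k)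
  have hG := HasDerivAt.fun_sum (u := Finset.univ) fun k _ => (ha k).fun_pow 2
  have hR := HasDerivAt.fun_sum (u := Finset.univ) fun k _ => (hx k).fun_pow 2
  have key := ((((((hv.fun_pow 2).const_mul (2 * t)).fun_neg.fun_mul (hx j)).fun_sub
    ((hX.const_mul (4 * t)).fun_mul (ha j))).fun_add
    ((hG.const_mul (2 * t)).fun_mul (hx j))).fun_sub
    ((((hR.add_const (t ^ 2)).const_mul 2).fun_mul hv).fun_mul (ha j))).fun_sub
    ((h0.const_mul (2 * ((n : ℝ) - 1) * t)).fun_mul (ha j))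
  rw [key.deriv]
  have e : fderiv ℝ (fun p : ℝ × Euc n => w p.1 p.2) (t, x) (sdir j) = dW w (sdir j) (t, x) := rfl
  rw [e]
  simp [Finset.sum_add_distrib, mul_assoc, ← Finset.mul_sum]
  ring

/-- The product rule for `∂_t q`; the mixed derivatives are written as `∂_{x_k} ∂_t w`. -/
lemma deriv_Qdens (t : ℝ) (x : Euc n) :
    deriv (fun s => Qdens w s x) t =
      4 * (∑ k, x k * dW w (sdir k) (t, x)) * dW w tdir (t, x)
      + 4 * t * (∑ k, x k * fderiv ℝ (dW w tdir) (t, x) (sdir k)) * dW w tdir (t, x)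
      + 4 * t * (∑ k, x k * dW w (sdir k) (t, x)) * fderiv ℝ (dW w tdir) (t, x) tdir
      + 2 * t * ((∑ k, dW w (sdir k) (t, x) ^ 2) + dW w tdir (t, x) ^ 2)
      + 2 * ((∑ k, x k ^ 2) + t ^ 2)
        * ((∑ k, dW w (sdir k) (t, x) * fderiv ℝ (dW w tdir) (t, x) (sdir k))
          + dW w tdir (t, x) * fderiv ℝ (dW w tdir) (t, x) tdir)
      + 2 * ((n : ℝ) - 1) * t * (dW w tdir (t, x) ^ 2
          + w t x * fderiv ℝ (dW w tdir) (t, x) tdir) := by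
  have hW : Differentiable ℝ (fun p : ℝ × Euc n => w p.1 p.2) := hw.differentiable (by norm_num)
  have hd := differentiable_dW hw
  simp_rw [Qdens_eq hw]
  have ha := fun k => hasDerivAt_time (hd (sdir k)) t x
  have hv := hasDerivAt_time (hd tdir) t x
  have h0 := hasDerivAt_time hW t x
  have ht := hasDerivAt_id' t
  have hX := HasDerivAt.fun_sum (u := Finset.univ) fun k _ => (ha k).const_mul (x k)
  have hG := HasDerivAt.fun_sum (u := Finset.univ) fun k _ => (ha k).fun_pow 2
  have key := (((((ht.const_mul 4).fun_mul hX).fun_mul hv).fun_add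
    (((ht.fun_pow 2).const_add (∑ k, x k ^ 2)).fun_mul (hG.fun_add (hv.fun_pow 2)))).fun_add
    (((ht.const_mul (2 * ((n : ℝ) - 1))).fun_mul h0).fun_mul hv)).fun_sub
    ((h0.fun_pow 2).const_mul ((n : ℝ) - 1))
  rw [key.deriv]
  have e : fderiv ℝ (fun p : ℝ × Euc n => w p.1 p.2) (t, x) tdir = dW w tdir (t, x) := rfl
  rw [e]
  simp [mul_assoc, ← Finset.mul_sum, dW_symm hw (sdir _) tdir]
  ring

end C2

/-- The identity at one point as algebra in the coordinates `x`, the first derivatives `a = ∇w` and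
`v = ∂_t w`, the Hessian `H`, the mixed derivatives `m = ∇∂_t w`, and `z = ∂_t² w`, `c = w`. -/
lemma coordinate_identity {n : ℕ} (t v z c : ℝ) (x a m : Fin n → ℝ) (H : Fin n → Fin n → ℝ)
    (hH : ∀ j k, H j k = H k j) :
    (∑ j, (-(4 * t * v * m j) * x j - 2 * t * v ^ 2
      - 4 * t * (a j + ∑ k, x k * H k j) * a j
      - 4 * t * (∑ k, x k * a k) * H j j
      + 4 * t * (∑ k, a k * H k j) * x j
      + 2 * t * (∑ k, a k ^ 2)
      - 4 * x j * v * a j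
      - 2 * ((∑ k, x k ^ 2) + t ^ 2) * (m j * a j + v * H j j)
      - 2 * ((n : ℝ) - 1) * t * (a j ^ 2 + c * H j j)))
    + (4 * (∑ k, x k * a k) * v + 4 * t * (∑ k, x k * m k) * v
      + 4 * t * (∑ k, x k * a k) * z
      + 2 * t * ((∑ k, a k ^ 2) + v ^ 2)
      + 2 * ((∑ k, x k ^ 2) + t ^ 2) * ((∑ k, a k * m k) + v * z)
      + 2 * ((n : ℝ) - 1) * t * (v ^ 2 + c * z))
    = (4 * t * (∑ k, x k * a k) + 2 * ((∑ k, x k ^ 2) + t ^ 2) * v + 2 * ((n : ℝ) - 1) * t * c)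
      * (z - ∑ j, H j j) := by
  have hHess : ∑ j, (∑ k, x k * H k j) * a j = ∑ j, (∑ k, a k * H k j) * x j := by
    simp_rw [Finset.sum_mul]
    rw [Finset.sum_comm]
    refine Finset.sum_congr rfl fun j _ => Finset.sum_congr rfl fun k _ => ?_
    rw [hH j k]; ring
  generalize hX : ∑ k, x k * a k = X
  generalize hG : ∑ k, a k ^ 2 = G
  generalize ∑ k, x k ^ 2 = R
  have hterm : ∀ j, (-(4 * t * v * m j) * x j - 2 * t * v ^ 2
      - 4 * t * (a j + ∑ k, x k * H k j) * a j
      - 4 * t * X * H j j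
      + 4 * t * (∑ k, a k * H k j) * x j
      + 2 * t * G
      - 4 * x j * v * a j
      - 2 * (R + t ^ 2) * (m j * a j + v * H j j)
      - 2 * ((n : ℝ) - 1) * t * (a j ^ 2 + c * H j j))
      = (-(4 * t * v)) * (x j * m j) + (2 * t * G - 2 * t * v ^ 2)
        + (-(4 * t) - 2 * ((n : ℝ) - 1) * t) * a j ^ 2
        + (-(4 * t)) * ((∑ k, x k * H k j) * a j)
        + (4 * t) * ((∑ k, a k * H k j) * x j)
        + (-(4 * v)) * (x j * a j)
        + (-(2 * (R + t ^ 2))) * (a j * m j)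
        + (-(4 * t * X) - 2 * (R + t ^ 2) * v - 2 * ((n : ℝ) - 1) * t * c) * H j j := by
    intro j; ring
  rw [Finset.sum_congr rfl fun j _ => hterm j]
  simp only [Finset.sum_add_distrib, ← Finset.mul_sum]
  rw [hHess, hX, hG]
  simp only [Finset.sum_const, Finset.card_univ, Fintype.card_fin, nsmul_eq_mul]
  ring

/-- Morawetz multiplier identity: `div_x p + ∂_t q = N(w) (∂_t² w − Δ_x w)`. -/
theorem morawetz_multiplier_identity {n : ℕ} (hn : 1 ≤ n)
    (w : ℝ → Euc n → ℝ)
    (hw : ContDiff ℝ 2 (fun p : ℝ × Euc n => w p.1 p.2))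
    (t : ℝ) (x : Euc n) :
    (∑ j, fderiv ℝ (fun y => Pfield w t y j) x (EuclideanSpace.single j 1))
      + deriv (fun s => Qdens w s x) t
      = Nmult w t x * (pt (pt w) t x - lap (w t) x) := by
  rw [Finset.sum_congr rfl fun j _ => fderiv_Pfield hw t x j, deriv_Qdens hw t x,
    Nmult, pt_pt_eq hw, lap_eq hw, pt_eq hw, inner_gradient_eq hw, EuclideanSpace.real_norm_sq_eq]
  exact coordinate_identity t _ _ _ x (fun k => dW w (sdir k) (t, x))
    (fun k => fderiv ℝ (dW w tdir) (t, x) (sdir k))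
    (fun k j => fderiv ℝ (dW w (sdir k)) (t, x) (sdir j))
    fun j k => dW_symm hw _ _ _
end
end

section
/- Let n ≥ 2 and R > 0. There is a constant C (depending only on n and R) such that every solution w as in the context satisfies, for every (t,x) ∈ ℝ × ℝⁿ with |t| − |x| ≥ 2R, (|t| − |x|)^{(n−1)/2} |w(t,x)| ≤ C |t|^{−(n−1)/2} ( ‖f‖_{L²(ℝⁿ)} + ‖g‖_{L²(ℝⁿ)} ). -/
noncomputable section
open MeasureTheory Real
open scoped RealInnerProductSpace BigOperators ENNReal

/-- `w` is a smooth solution of the free wave equation on `ℝ × ℝⁿ` with Cauchy data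
`f, g` smooth and supported in `{|x| ≤ R}`, enjoying finite propagation speed. -/
structure IsWaveSol (n : ℕ) (R : ℝ) (f g : Euc n → ℝ) (w : ℝ → Euc n → ℝ) : Prop where
  smooth_f : ContDiff ℝ (⊤ : ℕ∞) f
  smooth_g : ContDiff ℝ (⊤ : ℕ∞) g
  supp_f : tsupport f ⊆ Metric.closedBall 0 R
  supp_g : tsupport g ⊆ Metric.closedBall 0 R
  smooth_w : ContDiff ℝ (⊤ : ℕ∞) (fun p : ℝ × Euc n => w p.1 p.2)
  wave_eq : ∀ t x, pt (pt w) t x = lap (w t) x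
  init_pos : ∀ x, w 0 x = f x
  init_vel : ∀ x, pt w 0 x = g x
  fin_prop : ∀ t, tsupport (w t) ⊆ Metric.closedBall 0 (R + |t|)

/-- The `L²(ℝⁿ)` norm. -/
def L2norm {n : ℕ} (h : Euc n → ℝ) : ℝ :=
  (∫ x, (h x) ^ 2) ^ (1/2 : ℝ)

/-!
The proof represents `w(T, x)` by pairing `w` with an explicit complexified solution of the wave
equation; it treats even and odd dimensions alike and uses neither the Fourier transform nor
spherical means.

For `ε > 0` put `q = |y - x|² - (T - t - iε)²`. It never meets the branch cut `(-∞, 0]`, and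
`q ^ (-(n-1)/2)` is a smooth solution of the wave equation in `(t, y)` (`wave_ker`); let `k` be its
imaginary part. By Green's identity the pairing `∫ (∂ₜw · k - w · ∂ₜk) dy` is independent of `t`
(`pairing_const`). At `t = T` one has `q = |y - x|² + ε² > 0`, so `k` vanishes and `∂ₜk` is `n - 1`
times the Poisson kernel `ε (|y - x|² + ε²) ^ (-(n+1)/2)` (`pt_ker_self`), an approximate identity:
the pairing tends to a nonzero multiple of `w(T, x)` as `ε → 0` (`le_of_poisson_bound`).

At `t = 0` the pairing only involves the data, supported in `|y| ≤ R`. There, if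
`|T| - |x| ≥ 2R`, the factorisation of `q` gives
`|q| ≥ |T - iε| (|T| - |y - x|) ≥ |T| (|T| - |x|) / 2`, so `|k|` and `R |∂ₜk|` are bounded by a
constant times `(|T| (|T| - |x|)) ^ (-(n-1)/2)`, uniformly in `ε` (`ker_bounds`).
The Cauchy–Schwarz inequality on the ball of radius `R` replaces the `L¹` norms of the data by
their `L²` norms.
-/

/-! ### Conservation of the pairing of two solutions -/

lemma contDiff_pt {n : ℕ} {w : ℝ → Euc n → ℝ}
    (hw : ContDiff ℝ (⊤ : ℕ∞) (fun p : ℝ × Euc n => w p.1 p.2)) :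
    ContDiff ℝ (⊤ : ℕ∞) (fun p : ℝ × Euc n => pt w p.1 p.2) ∧
    ∀ t x, HasDerivAt (fun s => w s x) (pt w t x) t := by
  have key : ∀ t x, HasDerivAt (fun s => w s x)
      (fderiv ℝ (fun p : ℝ × Euc n => w p.1 p.2) (t, x) (1, 0)) t := by
    intro t x
    have h1 : HasFDerivAt (fun p : ℝ × Euc n => w p.1 p.2)
        (fderiv ℝ (fun p : ℝ × Euc n => w p.1 p.2) (t, x)) (t, x) :=
      (hw.differentiable (by simp) (t, x)).hasFDerivAt
    have h2 : HasDerivAt (fun s : ℝ => (s, x)) ((1 : ℝ), (0 : Euc n)) t :=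
      (hasDerivAt_id t).prodMk (hasDerivAt_const t x)
    exact h1.comp_hasDerivAt t h2
  have heq : ∀ t x, pt w t x = fderiv ℝ (fun p : ℝ × Euc n => w p.1 p.2) (t, x) (1, 0) :=
    fun t x => (key t x).deriv
  refine ⟨?_, fun t x => by rw [heq]; exact key t x⟩
  simp only [heq]
  exact (hw.fderiv_right (m := (⊤ : ℕ∞)) (by simp)).clm_apply contDiff_const

lemma contDiff_pj {n : ℕ} {u : Euc n → ℝ} (hu : ContDiff ℝ (⊤ : ℕ∞) u) (j : Fin n) :
    ContDiff ℝ (⊤ : ℕ∞) (fun y => pj u y j) :=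
  (hu.fderiv_right (m := (⊤ : ℕ∞)) (by simp)).clm_apply contDiff_const

lemma contDiff_slice {n : ℕ} {w : ℝ → Euc n → ℝ}
    (hw : ContDiff ℝ (⊤ : ℕ∞) (fun p : ℝ × Euc n => w p.1 p.2)) (t : ℝ) :
    ContDiff ℝ (⊤ : ℕ∞) (w t) :=
  hw.comp (contDiff_const.prodMk contDiff_id)

lemma hasCompactSupport_pj {n : ℕ} {u : Euc n → ℝ} (hu : HasCompactSupport u) (j : Fin n) :
    HasCompactSupport (fun y => pj u y j) :=
  (hu.fderiv (𝕜 := ℝ)).comp_left (g := fun L : Euc n →L[ℝ] ℝ => L (EuclideanSpace.single j 1))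
    (by simp)

lemma integral_pj_mul {n : ℕ} {u v : Euc n → ℝ} (hu : ContDiff ℝ (⊤ : ℕ∞) u)
    (hv : ContDiff ℝ (⊤ : ℕ∞) v) (hc : HasCompactSupport u) (j : Fin n) :
    ∫ y, pj u y j * v y = - ∫ y, u y * pj v y j := by
  have h1 : Integrable (fun y => pj u y j * v y) :=
    ((contDiff_pj hu j).continuous.mul hv.continuous).integrable_of_hasCompactSupport
      (hasCompactSupport_pj hc j).mul_right
  have h2 : Integrable (fun y => u y * pj v y j) :=
    (hu.continuous.mul (contDiff_pj hv j).continuous).integrable_of_hasCompactSupport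
      hc.mul_right
  have h3 : Integrable (fun y => u y * v y) :=
    (hu.continuous.mul hv.continuous).integrable_of_hasCompactSupport hc.mul_right
  have := integral_mul_fderiv_eq_neg_fderiv_mul_of_integrable (μ := volume)
    (f := u) (g := v) (v := EuclideanSpace.single j 1) h1 h2 h3
    (fun x _ => hu.differentiable (by simp) x) (fun x _ => hv.differentiable (by simp) x)
  simp only [pj] at *
  linarith

/-- Green's second identity when one of the functions has compact support. -/
lemma integral_lap_mul {n : ℕ} {u v : Euc n → ℝ} (hu : ContDiff ℝ (⊤ : ℕ∞) u)
    (hv : ContDiff ℝ (⊤ : ℕ∞) v) (hc : HasCompactSupport u) :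
    ∫ y, lap u y * v y = ∫ y, u y * lap v y := by
  simp only [lap, Finset.sum_mul, Finset.mul_sum]
  rw [integral_finsetSum, integral_finsetSum]
  · refine Finset.sum_congr rfl fun j _ => ?_
    rw [integral_pj_mul (contDiff_pj hu j) hv (hasCompactSupport_pj hc j) j,
      integral_pj_mul hu (contDiff_pj hv j) hc j, neg_neg]
  · intro j _
    exact (hu.continuous.mul (contDiff_pj (contDiff_pj hv j) j).continuous)
      |>.integrable_of_hasCompactSupport hc.mul_right
  · intro j _
    exact ((contDiff_pj (contDiff_pj hu j) j).continuous.mul hv.continuous)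
      |>.integrable_of_hasCompactSupport
        (hasCompactSupport_pj (hasCompactSupport_pj hc j) j).mul_right

/-- Differentiation under the integral sign for a family whose supports stay in a fixed ball
for parameters near `t₀`. -/
lemma hasDerivAt_integral_of_local_support {n : ℕ} {F F' : ℝ → Euc n → ℝ}
    (hF : Continuous (fun p : ℝ × Euc n => F p.1 p.2))
    (hF' : Continuous (fun p : ℝ × Euc n => F' p.1 p.2))
    (hd : ∀ t y, HasDerivAt (fun s => F s y) (F' t y) t) (t₀ M : ℝ)
    (hs : ∀ t ∈ Metric.ball t₀ 1, ∀ y : Euc n, M < ‖y‖ → F t y = 0) :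
    HasDerivAt (fun t => ∫ y, F t y) (∫ y, F' t₀ y) t₀ := by
  have hcF : ∀ t, Continuous (F t) := fun t => hF.comp (by fun_prop : Continuous fun y => (t, y))
  have hcF' : ∀ t, Continuous (F' t) :=
    fun t => hF'.comp (by fun_prop : Continuous fun y => (t, y))
  have hs' : ∀ t ∈ Metric.ball t₀ 1, ∀ y : Euc n, M < ‖y‖ → F' t y = 0 := by
    intro t ht y hy
    have h0 : (fun s => F s y) =ᶠ[nhds t] fun _ => (0 : ℝ) := by
      filter_upwards [Metric.isOpen_ball.mem_nhds ht] with s hs1 using hs s hs1 y hy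
    exact (hd t y).unique ((hasDerivAt_const t (0 : ℝ)).congr_of_eventuallyEq h0)
  obtain ⟨C, hC⟩ := ((isCompact_closedBall t₀ 1).prod
    (isCompact_closedBall (0 : Euc n) M)).exists_bound_of_continuousOn hF'.continuousOn
  refine (hasDerivAt_integral_of_dominated_loc_of_deriv_le (μ := volume)
    (bound := (Metric.closedBall (0 : Euc n) M).indicator fun _ => C)
    (Metric.ball_mem_nhds t₀ one_pos) (Filter.Eventually.of_forall fun t =>
      (hcF t).aestronglyMeasurable) ?_ (hcF' t₀).aestronglyMeasurable ?_ ?_ ?_).2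
  · refine (hcF t₀).integrable_of_hasCompactSupport
      (HasCompactSupport.intro (isCompact_closedBall (0 : Euc n) M) fun y hy => ?_)
    exact hs t₀ (Metric.mem_ball_self one_pos) y (by simpa using hy)
  · refine Filter.Eventually.of_forall fun y t ht => ?_
    by_cases hy : y ∈ Metric.closedBall (0 : Euc n) M
    · rw [Set.indicator_of_mem hy]
      exact hC (t, y) ⟨Metric.ball_subset_closedBall ht, hy⟩
    · rw [hs' t ht y (by simpa using hy)]
      simp [hy]
  · exact (integrable_indicator_iff Metric.isClosed_closedBall.measurableSet).2
      (integrableOn_const (isCompact_closedBall _ _).measure_lt_top.ne)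
  · exact Filter.Eventually.of_forall fun y t _ => hd t y

/-- The symplectic pairing of two smooth solutions of the wave equation, one of which propagates
with finite speed from a bounded set, does not depend on time. -/
lemma pairing_const {n : ℕ} {R : ℝ} {w k : ℝ → Euc n → ℝ}
    (hw : ContDiff ℝ (⊤ : ℕ∞) (fun p : ℝ × Euc n => w p.1 p.2))
    (hk : ContDiff ℝ (⊤ : ℕ∞) (fun p : ℝ × Euc n => k p.1 p.2))
    (ww : ∀ t x, pt (pt w) t x = lap (w t) x) (wk : ∀ t x, pt (pt k) t x = lap (k t) x)
    (hs : ∀ t, tsupport (w t) ⊆ Metric.closedBall 0 (R + |t|)) (T : ℝ) :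
    ∫ y, (pt w T y * k T y - w T y * pt k T y) = ∫ y, (pt w 0 y * k 0 y - w 0 y * pt k 0 y) := by
  obtain ⟨hw1, dw⟩ := contDiff_pt hw
  obtain ⟨hw2, dw1⟩ := contDiff_pt hw1
  obtain ⟨hk1, dk⟩ := contDiff_pt hk
  obtain ⟨hk2, dk1⟩ := contDiff_pt hk1
  have hws : ∀ t, ∀ y : Euc n, R + |t| < ‖y‖ → w t y = 0 := by
    intro t y hy
    by_contra h
    have := hs t (subset_tsupport _ h)
    simp at this
    linarith
  have hcs : ∀ t, HasCompactSupport (w t) := fun t =>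
    HasCompactSupport.intro (isCompact_closedBall (0 : Euc n) (R + |t|))
      fun y hy => hws t y (by simpa using hy)
  have hder : ∀ t₀, HasDerivAt (fun t => ∫ y, (pt w t y * k t y - w t y * pt k t y)) 0 t₀ := by
    intro t₀
    have h := hasDerivAt_integral_of_local_support
      (F := fun t y => pt w t y * k t y - w t y * pt k t y)
      (F' := fun t y => pt (pt w) t y * k t y - w t y * pt (pt k) t y)
      ((hw1.continuous.mul hk.continuous).sub (hw.continuous.mul hk1.continuous))
      ((hw2.continuous.mul hk.continuous).sub (hw.continuous.mul hk2.continuous))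
      (fun t y => by
        exact (((dw1 t y).mul (dk t y)).sub ((dw t y).mul (dk1 t y))).congr_deriv (by ring))
      t₀ (R + |t₀| + 1) ?_
    · convert h using 1
      simp only [ww, wk]
      have hsw := contDiff_slice hw t₀
      have hsk := contDiff_slice hk t₀
      have hlw : Continuous (lap (w t₀)) := by
        unfold lap
        exact continuous_finsetSum _ fun j _ => (contDiff_pj (contDiff_pj hsw j) j).continuous
      have hlk : Continuous (lap (k t₀)) := by
        unfold lap
        exact continuous_finsetSum _ fun j _ => (contDiff_pj (contDiff_pj hsk j) j).continuous
      have hclw : HasCompactSupport (lap (w t₀)) := by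
        refine HasCompactSupport.intro (hcs t₀) fun y hy => ?_
        refine Finset.sum_eq_zero fun j _ => ?_
        have h0 : w t₀ =ᶠ[nhds y] fun _ => 0 := by
          rwa [notMem_tsupport_iff_eventuallyEq] at hy
        have h1 : (fun z => pj (w t₀) z j) =ᶠ[nhds y] fun _ => 0 := by
          filter_upwards [h0.eventuallyEq_nhds] with z hz
          simp [pj, hz.fderiv_eq]
        simpa [pj] using congrArg (fun L => L (EuclideanSpace.single j (1:ℝ)))
          (Filter.EventuallyEq.fderiv_eq (𝕜 := ℝ) h1)
      rw [integral_sub, integral_lap_mul hsw hsk (hcs t₀), sub_self]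
      · exact (hlw.mul hsk.continuous).integrable_of_hasCompactSupport hclw.mul_right
      · exact (hsw.continuous.mul hlk).integrable_of_hasCompactSupport (hcs t₀).mul_right
    · intro t ht y hy
      have hz : ∀ s ∈ Metric.ball t₀ 1, w s y = 0 := by
        intro s hs1
        apply hws
        rw [Metric.mem_ball, Real.dist_eq] at hs1
        have := abs_sub_abs_le_abs_sub s t₀
        linarith
      have h0 : (fun s => w s y) =ᶠ[nhds t] fun _ => (0 : ℝ) := by
        filter_upwards [Metric.isOpen_ball.mem_nhds ht] with s hs1 using hz s hs1
      have h1 : pt w t y = 0 := by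
        rw [pt, h0.deriv_eq]; simp
      simp [h1, hz t ht]
  exact is_const_of_deriv_eq_zero (fun t => (hder t).differentiableAt)
    (fun t => (hder t).deriv) T 0

/-! ### The complexified fundamental wave -/

/-- The complexified Lorentzian square distance `|y - x|² - (T - t - iε)²`. -/
def cq {n : ℕ} (T ε : ℝ) (x : Euc n) (t : ℝ) (y : Euc n) : ℂ :=
  ((‖y - x‖ ^ 2 : ℝ) : ℂ) - (((T - t : ℝ) : ℂ) - ε * Complex.I) ^ 2

/-- The exponent `-(n-1)/2` for which `cq ^ expo` solves the wave equation. -/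
def expo (n : ℕ) : ℂ := ((-(((n : ℝ) - 1) / 2) : ℝ) : ℂ)

/-- The real wave `Im (|y - x|² - (T - t - iε)²)^{-(n-1)/2}`. -/
def ker {n : ℕ} (T ε : ℝ) (x : Euc n) (t : ℝ) (y : Euc n) : ℝ :=
  (cq T ε x t y ^ expo n).im

/-- The regularisation `ε > 0` keeps `cq` off the branch cut of the power function for all times,
including across the light cone. -/
lemma cq_mem_slitPlane {n : ℕ} {T ε : ℝ} (hε : 0 < ε) (x : Euc n) (t : ℝ) (y : Euc n) :
    cq T ε x t y ∈ Complex.slitPlane := by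
  rw [Complex.mem_slitPlane_iff]
  have hre : (cq T ε x t y).re = ‖y - x‖ ^ 2 - (T - t) ^ 2 + ε ^ 2 := by
    simp only [cq, pow_two]; simp; ring
  have him : (cq T ε x t y).im = 2 * (T - t) * ε := by
    simp only [cq, pow_two]; simp; ring
  rw [hre, him]
  by_cases h : T - t = 0
  · left; rw [h]; nlinarith [sq_nonneg ‖y - x‖, pow_pos hε 2]
  · right; exact mul_ne_zero (mul_ne_zero two_ne_zero h) hε.ne'

lemma hasDerivAt_cpow_comp {u : ℝ → ℂ} {u' : ℂ} {s : ℝ} (b : ℂ) (hu : HasDerivAt u u' s)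
    (hs : u s ∈ Complex.slitPlane) :
    HasDerivAt (fun r => u r ^ b) (b * u s ^ (b - 1) * u') s := by
  have h := ((hasDerivAt_id (u s)).cpow_const (c := b) hs).comp s hu
  exact h.congr_deriv (by simp)

lemma hasDerivAt_im {u : ℝ → ℂ} {u' : ℂ} {s : ℝ} (hu : HasDerivAt u u' s) :
    HasDerivAt (fun r => (u r).im) u'.im s :=
  Complex.imCLM.hasFDerivAt.comp_hasDerivAt s hu

lemma contDiff_ker {n : ℕ} {T ε : ℝ} (hε : 0 < ε) (x : Euc n) :
    ContDiff ℝ (⊤ : ℕ∞) (fun p : ℝ × Euc n => ker T ε x p.1 p.2) := by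
  have h1 : ContDiff ℝ (⊤ : ℕ∞) (fun p : ℝ × Euc n => cq T ε x p.1 p.2) := by
    unfold cq
    have h2 : ContDiff ℝ (⊤ : ℕ∞) (fun p : ℝ × Euc n => ‖p.2 - x‖ ^ 2) :=
      ContDiff.norm_sq ℝ (contDiff_snd.sub contDiff_const)
    have h3 : ContDiff ℝ (⊤ : ℕ∞) (fun p : ℝ × Euc n => T - p.1) :=
      contDiff_const.sub contDiff_fst
    exact (Complex.ofRealCLM.contDiff.comp h2).sub
      (((Complex.ofRealCLM.contDiff.comp h3).sub contDiff_const).pow 2)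
  refine Complex.imCLM.contDiff.comp (contDiff_iff_contDiffAt.2 fun p => ?_)
  have h4 : ContDiffAt ℂ (⊤ : ℕ∞) (fun z : ℂ => z ^ expo n) (cq T ε x p.1 p.2) :=
    (analyticAt_id.cpow analyticAt_const (cq_mem_slitPlane hε x p.1 p.2)).contDiffAt
  exact (h4.restrict_scalars ℝ).comp p h1.contDiffAt

lemma hasDerivAt_cq_time {n : ℕ} (T ε : ℝ) (x : Euc n) (t : ℝ) (y : Euc n) :
    HasDerivAt (fun s => cq T ε x s y) (2 * (((T - t : ℝ) : ℂ) - ε * Complex.I)) t := by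
  have h1 : HasDerivAt (fun s : ℝ => ((T - s : ℝ) : ℂ) - ε * Complex.I) (-1) t := by
    have := ((hasDerivAt_id t).const_sub T).ofReal_comp
    simpa using this.sub_const (ε * Complex.I)
  exact ((h1.pow 2).const_sub _).congr_deriv (by norm_num)

lemma hasDerivAt_coord {n : ℕ} (x y : Euc n) (j : Fin n) (s : ℝ) :
    HasDerivAt (fun s : ℝ => (((y + s • EuclideanSpace.single j (1:ℝ) - x) j : ℝ) : ℂ)) 1 s := by
  have : HasDerivAt (fun s : ℝ => (y + s • EuclideanSpace.single j (1:ℝ) - x) j) 1 s := by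
    simpa using ((hasDerivAt_id s).const_add (y j)).sub_const (x j)
  simpa using this.ofReal_comp

lemma hasDerivAt_cq_space {n : ℕ} (T ε : ℝ) (x : Euc n) (t : ℝ) (y : Euc n) (j : Fin n) :
    HasDerivAt (fun s : ℝ => cq T ε x t (y + s • EuclideanSpace.single j (1:ℝ)))
      (2 * (((y - x) j : ℝ) : ℂ)) 0 := by
  have h1 : HasDerivAt (fun s : ℝ => ‖y + s • EuclideanSpace.single j (1:ℝ) - x‖ ^ 2)
      (2 * (y - x) j) 0 := by
    have h2 : HasDerivAt (fun s : ℝ => y + s • EuclideanSpace.single j (1:ℝ) - x)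
        (EuclideanSpace.single j (1:ℝ)) 0 := by
      simpa using (((hasDerivAt_id (0:ℝ)).smul_const
        (EuclideanSpace.single j (1:ℝ))).const_add y).sub_const x
    simpa [EuclideanSpace.inner_single_right] using h2.norm_sq
  have := h1.ofReal_comp.sub_const ((((T - t : ℝ) : ℂ) - ε * Complex.I) ^ 2)
  simpa [cq] using this

lemma pj_eq_of_hasDerivAt {n : ℕ} {u : Euc n → ℝ} (hu : Differentiable ℝ u) {y : Euc n}
    {j : Fin n} {d : ℝ}
    (h : HasDerivAt (fun s : ℝ => u (y + s • EuclideanSpace.single j (1:ℝ))) d 0) :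
    pj u y j = d :=
  ((hu y).hasFDerivAt.hasLineDerivAt (EuclideanSpace.single j (1:ℝ))).unique h

lemma pt_ker {n : ℕ} {T ε : ℝ} (hε : 0 < ε) (x : Euc n) (t : ℝ) (y : Euc n) :
    pt (ker T ε x) t y = (expo n * cq T ε x t y ^ (expo n - 1) *
      (2 * (((T - t : ℝ) : ℂ) - ε * Complex.I))).im :=
  (hasDerivAt_im (hasDerivAt_cpow_comp (expo n) (hasDerivAt_cq_time T ε x t y)
    (cq_mem_slitPlane hε x t y))).deriv

lemma pj_ker {n : ℕ} {T ε : ℝ} (hε : 0 < ε) (x : Euc n) (t : ℝ) (y : Euc n) (j : Fin n) :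
    pj (ker T ε x t) y j = (expo n * cq T ε x t y ^ (expo n - 1) *
      (2 * (((y - x) j : ℝ) : ℂ))).im := by
  refine pj_eq_of_hasDerivAt ((contDiff_slice (contDiff_ker hε x) t).differentiable (by simp)) ?_
  have := hasDerivAt_im (hasDerivAt_cpow_comp (expo n) (hasDerivAt_cq_space T ε x t y j)
    (by simpa using cq_mem_slitPlane hε x t y))
  simpa [ker] using this

/-- `ker` solves the wave equation: with `b = expo n` and `q = cq`, `□ q ^ b` equals
`b q ^ (b - 1) (4 (b - 1) + 2 n + 2)`, which vanishes exactly for `b = -(n-1)/2`. -/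
lemma wave_ker {n : ℕ} {T ε : ℝ} (hε : 0 < ε) (x : Euc n) (t : ℝ) (y : Euc n) :
    pt (pt (ker T ε x)) t y = lap (ker T ε x t) y := by
  set b := expo n with hb
  set q := cq T ε x t y with hq
  have hqs := cq_mem_slitPlane (T := T) hε x t y
  set σ : ℂ := ((T - t : ℝ) : ℂ) - ε * Complex.I with hσ
  have htt : pt (pt (ker T ε x)) t y
      = (b * ((b - 1) * q ^ (b - 1 - 1) * (2 * σ)) * (2 * σ) + b * q ^ (b - 1) * (-2)).im := by
    unfold pt
    change deriv (fun s => pt (ker T ε x) s y) t = _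
    simp only [pt_ker hε]
    have h1 : HasDerivAt (fun s : ℝ => 2 * (((T - s : ℝ) : ℂ) - ε * Complex.I)) (-2) t := by
      have := ((hasDerivAt_id t).const_sub T).ofReal_comp
      simpa using (this.sub_const (ε * Complex.I)).const_mul 2
    exact (hasDerivAt_im (((hasDerivAt_cpow_comp (b - 1)
      (hasDerivAt_cq_time T ε x t y) hqs).const_mul b).mul h1)).deriv
  have hjj : ∀ j, pj (fun z => pj (ker T ε x t) z j) y j
      = (b * ((b - 1) * q ^ (b - 1 - 1) * (2 * (((y - x) j : ℝ) : ℂ))) *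
          (2 * (((y - x) j : ℝ) : ℂ)) + b * q ^ (b - 1) * 2).im := by
    intro j
    refine pj_eq_of_hasDerivAt ((contDiff_pj (contDiff_slice (contDiff_ker hε x) t) j).differentiable
      (by simp)) ?_
    simp only [pj_ker hε]
    have h1 := (hasDerivAt_coord x y j 0).const_mul 2
    have h2 := hasDerivAt_im (((hasDerivAt_cpow_comp (b - 1)
      (hasDerivAt_cq_space T ε x t y j) (by simpa using hqs)).const_mul b).mul h1)
    simpa using h2
  rw [htt, lap]
  simp only [hjj]
  rw [← Complex.im_sum]
  congr 1
  rw [Finset.sum_add_distrib]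
  have hsum : ∑ j, b * ((b - 1) * q ^ (b - 1 - 1) * (2 * (((y - x) j : ℝ) : ℂ))) *
          (2 * (((y - x) j : ℝ) : ℂ)) = b * (b - 1) * q ^ (b - 1 - 1) * 4 * (q + σ ^ 2) := by
    have : q + σ ^ 2 = ∑ j, (((y - x) j : ℝ) : ℂ) ^ 2 := by
      rw [hq, cq, ← hσ, sub_add_cancel, EuclideanSpace.norm_sq_eq]
      push_cast
      refine Finset.sum_congr rfl fun j _ => ?_
      rw [← Complex.ofReal_pow, Real.norm_eq_abs, sq_abs]
      simp
    rw [this, Finset.mul_sum]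
    exact Finset.sum_congr rfl fun j _ => by ring
  rw [hsum]
  have hq0 : q ≠ 0 := Complex.slitPlane_ne_zero hqs
  have hpow : q ^ (b - 1) = q ^ (b - 1 - 1) * q := by
    rw [Complex.cpow_sub (b - 1) 1 hq0, Complex.cpow_one]
    field_simp
  have hbn : (n : ℂ) = 1 - 2 * b := by
    rw [hb, expo]; push_cast; ring
  simp only [Finset.sum_const, Finset.card_univ, Fintype.card_fin, nsmul_eq_mul]
  rw [hpow, hbn]
  ring

/-! ### The kernel at time `T`: the Poisson kernel as approximate identity -/

lemma cq_self {n : ℕ} (T ε : ℝ) (x y : Euc n) :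
    cq T ε x T y = ((‖y - x‖ ^ 2 + ε ^ 2 : ℝ) : ℂ) := by
  simp only [cq, sub_self, Complex.ofReal_zero, zero_sub, neg_sq, mul_pow, Complex.I_sq]
  push_cast; ring

lemma ker_self {n : ℕ} (T ε : ℝ) (x y : Euc n) : ker T ε x T y = 0 := by
  rw [ker, cq_self, expo, ← Complex.ofReal_cpow (by positivity), Complex.ofReal_im]

/-- At time `T` the velocity of the wave `ker T ε x` is a multiple of the Poisson kernel of the
upper half-space at height `ε`. -/
lemma pt_ker_self {n : ℕ} {T ε : ℝ} (hε : 0 < ε) (x y : Euc n) :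
    pt (ker T ε x) T y
      = (n - 1) * (ε * (‖y - x‖ ^ 2 + ε ^ 2) ^ (-((n : ℝ) + 1) / 2)) := by
  have he : expo n - 1 = ((-((n : ℝ) + 1) / 2 : ℝ) : ℂ) := by
    rw [expo]; push_cast; ring
  rw [pt_ker hε, cq_self, he, ← Complex.ofReal_cpow (by positivity), expo]
  simp
  ring

/-- Substituting `y = x + εz` in the Poisson kernel integral. -/
lemma integral_poisson_rescale {n : ℕ} (φ : Euc n → ℝ) {ε : ℝ} (hε : 0 < ε) (x : Euc n) :
    ∫ y, φ y * (ε * (‖y - x‖ ^ 2 + ε ^ 2) ^ (-((n : ℝ) + 1) / 2))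
      = ∫ z, φ (x + ε • z) * (1 + ‖z‖ ^ 2) ^ (-((n : ℝ) + 1) / 2) := by
  rw [← integral_add_left_eq_self _ x]
  have h := Measure.integral_comp_smul_of_nonneg (volume : Measure (Euc n))
    (fun y => φ (x + y) * (ε * (‖x + y - x‖ ^ 2 + ε ^ 2) ^ (-((n : ℝ) + 1) / 2))) ε (hR := hε.le)
  rw [finrank_euclideanSpace_fin, smul_eq_mul, inv_mul_eq_div, eq_div_iff (by positivity)] at h
  rw [← h, ← integral_mul_const]
  refine integral_congr_ae (Filter.Eventually.of_forall fun z => ?_)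
  have h1 : ‖x + ε • z - x‖ ^ 2 + ε ^ 2 = ε ^ 2 * (1 + ‖z‖ ^ 2) := by
    rw [add_sub_cancel_left, norm_smul, Real.norm_eq_abs, mul_pow, sq_abs]; ring
  have h2 : (ε ^ 2) ^ (-((n : ℝ) + 1) / 2) * ε * ε ^ n = 1 := by
    rw [← Real.rpow_natCast ε 2, ← Real.rpow_mul hε.le, ← Real.rpow_natCast ε n,
      mul_assoc, mul_comm ε, ← Real.rpow_add_one hε.ne', ← Real.rpow_add hε]
    convert Real.rpow_zero ε using 2
    push_cast; ring
  simp only [h1]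
  rw [Real.mul_rpow (by positivity) (by positivity)]
  linear_combination (φ (x + ε • z) * (1 + ‖z‖ ^ 2) ^ (-((n : ℝ) + 1) / 2)) * h2

/-- The mass of the unnormalised Poisson kernel. -/
def mass (n : ℕ) : ℝ := ∫ z : Euc n, (1 + ‖z‖ ^ 2) ^ (-((n : ℝ) + 1) / 2)

lemma integrable_mass (n : ℕ) :
    Integrable (fun z : Euc n => (1 + ‖z‖ ^ 2) ^ (-((n : ℝ) + 1) / 2)) :=
  integrable_rpow_neg_one_add_norm_sq (by simp)

lemma mass_pos (n : ℕ) : 0 < mass n := by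
  have hp : ∀ z : Euc n, 0 < (1 + ‖z‖ ^ 2) ^ (-((n : ℝ) + 1) / 2) := fun z => by positivity
  rw [mass, integral_pos_iff_support_of_nonneg (fun z => (hp z).le) (integrable_mass n)]
  have : Function.support (fun z : Euc n => (1 + ‖z‖ ^ 2) ^ (-((n : ℝ) + 1) / 2)) = Set.univ :=
    Set.eq_univ_of_forall fun z => (hp z).ne'
  rw [this]
  exact isOpen_univ.measure_pos _ Set.univ_nonempty

/-- A uniform bound on the Poisson integrals of `φ` bounds the boundary value of `φ`. -/
lemma le_of_poisson_bound {n : ℕ} {φ : Euc n → ℝ} (hφ : Continuous φ) (hc : HasCompactSupport φ)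
    (x : Euc n) {B : ℝ}
    (h : ∀ ε : ℝ, 0 < ε →
      |∫ y, φ y * (ε * (‖y - x‖ ^ 2 + ε ^ 2) ^ (-((n : ℝ) + 1) / 2))| ≤ B) :
    |φ x| * mass n ≤ B := by
  obtain ⟨S, hS⟩ := hc.exists_bound_of_continuous hφ
  have hcont : ∀ ε : ℝ, Continuous (fun z : Euc n =>
      φ (x + ε • z) * (1 + ‖z‖ ^ 2) ^ (-((n : ℝ) + 1) / 2)) := fun ε => by
    refine (hφ.comp (by fun_prop)).mul (Continuous.rpow_const (by fun_prop) fun z => ?_)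
    left; positivity
  have hlim : Filter.Tendsto
      (fun ε : ℝ => ∫ z, φ (x + ε • z) * (1 + ‖z‖ ^ 2) ^ (-((n : ℝ) + 1) / 2))
      (nhdsWithin 0 (Set.Ioi 0))
      (nhds (∫ z : Euc n, φ x * (1 + ‖z‖ ^ 2) ^ (-((n : ℝ) + 1) / 2))) := by
    refine tendsto_integral_filter_of_dominated_convergence
      (fun z : Euc n => S * (1 + ‖z‖ ^ 2) ^ (-((n : ℝ) + 1) / 2))
      (Filter.Eventually.of_forall fun ε => (hcont ε).aestronglyMeasurable)
      (Filter.Eventually.of_forall fun ε => Filter.Eventually.of_forall fun z => ?_)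
      ((integrable_mass n).const_mul S) (Filter.Eventually.of_forall fun z => ?_)
    · rw [norm_mul, Real.norm_of_nonneg
        (by positivity : (0:ℝ) ≤ (1 + ‖z‖ ^ 2) ^ (-((n : ℝ) + 1) / 2))]
      gcongr
      exact hS _
    · have : Continuous fun ε : ℝ => φ (x + ε • z) * (1 + ‖z‖ ^ 2) ^ (-((n : ℝ) + 1) / 2) := by
        fun_prop
      simpa using (this.tendsto 0).mono_left nhdsWithin_le_nhds
  rw [integral_const_mul] at hlim
  have h2 := le_of_tendsto hlim.abs (b := B) (by
    filter_upwards [self_mem_nhdsWithin] with ε hε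
    rw [← integral_poisson_rescale φ hε x]
    exact h ε hε)
  rwa [abs_mul, ← mass, abs_of_pos (mass_pos n)] at h2

/-- Cauchy–Schwarz on the ball of radius `R`. -/
lemma exists_L1_le_L2 (n : ℕ) (R : ℝ) : ∃ V : ℝ, 0 < V ∧ ∀ f : Euc n → ℝ, Continuous f →
    tsupport f ⊆ Metric.closedBall 0 R → ∫ y, |f y| ≤ V * L2norm f := by
  set ι : Euc n → ℝ := (Metric.closedBall (0 : Euc n) R).indicator fun _ => 1 with hι
  refine ⟨(∫ y, ι y ^ (2:ℝ)) ^ (1/2 : ℝ) + 1, ?_, fun f hf hs => ?_⟩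
  · have : 0 ≤ ∫ y, ι y ^ (2:ℝ) := integral_nonneg fun y =>
      Real.rpow_nonneg (Set.indicator_nonneg (fun _ _ => zero_le_one) y) _
    positivity
  have hcs : HasCompactSupport f :=
    (isCompact_closedBall (0 : Euc n) R).of_isClosed_subset (isClosed_tsupport f) hs
  have h1 : ∀ y, |f y| = |f y| * ι y := by
    intro y
    by_cases hy : y ∈ Metric.closedBall (0 : Euc n) R
    · simp [hι, hy]
    · rw [image_eq_zero_of_notMem_tsupport fun h => hy (hs h)]; simp
  have hcf : HasCompactSupport fun y => |f y| := hcs.comp_left (g := fun r : ℝ => |r|) abs_zero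
  have h2 := integral_mul_le_Lp_mul_Lq_of_nonneg (μ := (volume : Measure (Euc n)))
    (f := fun y => |f y|) (g := ι) Real.HolderConjugate.two_two
    (Filter.Eventually.of_forall fun y => abs_nonneg (f y))
    (Filter.Eventually.of_forall fun y => Set.indicator_nonneg (fun _ _ => zero_le_one) y)
    (hf.abs.memLp_of_hasCompactSupport hcf)
    (memLp_indicator_const _ Metric.isClosed_closedBall.measurableSet _
      (Or.inr (isCompact_closedBall _ _).measure_lt_top.ne))
  simp only [← h1, Real.rpow_two, sq_abs] at h2
  have h3 : 0 ≤ L2norm f := Real.rpow_nonneg (integral_nonneg fun y => sq_nonneg _) _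
  simp only [Real.rpow_two]
  calc ∫ y, |f y| ≤ _ := h2
    _ = (∫ y, ι y ^ 2) ^ (1/2 : ℝ) * L2norm f := by rw [L2norm, mul_comm]
    _ ≤ _ := by nlinarith

/-! ### The kernel at time zero, inside the light cone -/

/-- The factorisation `|cq| = |r - σ| |r + σ|` with `σ = T - iε`, where one factor is at least
`|σ|` and the other at least `|T| - r`. -/
lemma norm_cq_lower {n : ℕ} {T ε : ℝ} (x y : Euc n) :
    ‖((T : ℝ) : ℂ) - ε * Complex.I‖ * (|T| - ‖y - x‖) ≤ ‖cq T ε x 0 y‖ := by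
  refine le_of_sq_le_sq ?_ (norm_nonneg _)
  have hre : (cq T ε x 0 y).re = ‖y - x‖ ^ 2 - T ^ 2 + ε ^ 2 := by
    simp only [cq, pow_two]; simp; ring
  have him : (cq T ε x 0 y).im = 2 * T * ε := by
    simp only [cq, pow_two]; simp; ring
  have hσ : Complex.normSq ((T : ℂ) - ε * Complex.I) = |T| ^ 2 + ε ^ 2 := by
    rw [Complex.normSq_apply, sq_abs]; simp; ring
  rw [mul_pow, Complex.sq_norm, Complex.sq_norm, hσ, Complex.normSq_apply, hre, him]
  have hr : 0 ≤ ‖y - x‖ := norm_nonneg _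
  have hA : 0 ≤ |T| := abs_nonneg T
  have hT : T ^ 2 = |T| ^ 2 := (sq_abs T).symm
  generalize ‖y - x‖ = r at *
  generalize |T| = A at *
  have key : (r ^ 2 - T ^ 2 + ε ^ 2) * (r ^ 2 - T ^ 2 + ε ^ 2) + 2 * T * ε * (2 * T * ε)
      = ((A - r) ^ 2 + ε ^ 2) * ((A + r) ^ 2 + ε ^ 2) := by
    linear_combination (T ^ 2 + A ^ 2 - 2 * r ^ 2 + 2 * ε ^ 2) * hT
  rw [key, mul_comm]
  gcongr
  · nlinarith [sq_nonneg ε]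
  · linarith

/-- Bounds, uniform in `ε`, for the complexified fundamental wave at time `0` on the support
of the data, for `(T, x)` well inside the light cone. -/
lemma ker_bounds {n : ℕ} (hn : 2 ≤ n) {R T ε : ℝ} (hR : 0 < R) (hε : 0 < ε) {x y : Euc n}
    (hx : 2 * R ≤ |T| - ‖x‖) (hy : ‖y‖ ≤ R) :
    |ker T ε x 0 y| ≤ (|T| * ((|T| - ‖x‖) / 2)) ^ (-(((n : ℝ) - 1) / 2)) ∧
    |pt (ker T ε x) 0 y| ≤
      (n - 1) / R * (|T| * ((|T| - ‖x‖) / 2)) ^ (-(((n : ℝ) - 1) / 2)) := by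
  have hn' : (2 : ℝ) ≤ n := by exact_mod_cast hn
  have hr : ‖y - x‖ ≤ R + ‖x‖ := (norm_sub_le y x).trans (by linarith)
  have hx0 : 0 ≤ ‖x‖ := norm_nonneg x
  have hT : 0 < |T| := by linarith
  set σ : ℂ := (T : ℂ) - ε * Complex.I with hσ
  have hσT : |T| ≤ ‖σ‖ := by
    have := Complex.abs_re_le_norm σ
    simpa [hσ] using this
  have hσ0 : 0 < ‖σ‖ := hT.trans_le hσT
  have hlow := norm_cq_lower (ε := ε) x y (T := T)
  rw [← hσ] at hlow
  set q := cq T ε x 0 y with hq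
  have hD : |T| * ((|T| - ‖x‖) / 2) ≤ ‖q‖ :=
    le_trans (mul_le_mul hσT (by linarith) (by linarith) hσ0.le) hlow
  have hqR : ‖σ‖ * R ≤ ‖q‖ := le_trans (by gcongr; linarith) hlow
  have hD0 : 0 < |T| * ((|T| - ‖x‖) / 2) := mul_pos hT (by linarith)
  have hq0 : 0 < ‖q‖ := hD0.trans_le hD
  have hmono : ‖q‖ ^ (-(((n : ℝ) - 1) / 2))
      ≤ (|T| * ((|T| - ‖x‖) / 2)) ^ (-(((n : ℝ) - 1) / 2)) :=
    Real.rpow_le_rpow_of_nonpos hD0 hD (by linarith)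
  refine ⟨?_, ?_⟩
  · refine (Complex.abs_im_le_norm _).trans ?_
    rwa [expo, Complex.norm_cpow_real]
  · rw [pt_ker hε]
    refine (Complex.abs_im_le_norm _).trans ?_
    have he : expo n - 1 = ((-(((n : ℝ) - 1) / 2) - 1 : ℝ) : ℂ) := by
      rw [expo]; push_cast; ring
    have hne : ‖expo n‖ = ((n : ℝ) - 1) / 2 := by
      rw [expo, Complex.norm_real, norm_neg, Real.norm_of_nonneg (by linarith)]
    rw [sub_zero, ← hσ, ← hq, norm_mul, norm_mul, norm_mul, he, Complex.norm_cpow_real, hne,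
      Real.rpow_sub_one hq0.ne', Complex.norm_ofNat]
    have h1 : ‖σ‖ / ‖q‖ ≤ 1 / R := by
      rw [div_le_div_iff₀ hq0 hR]; linarith
    calc ((n : ℝ) - 1) / 2 * (‖q‖ ^ (-(((n : ℝ) - 1) / 2)) / ‖q‖) * (2 * ‖σ‖)
        = ((n : ℝ) - 1) * ‖q‖ ^ (-(((n : ℝ) - 1) / 2)) * (‖σ‖ / ‖q‖) := by ring
      _ ≤ ((n : ℝ) - 1) * (|T| * ((|T| - ‖x‖) / 2)) ^ (-(((n : ℝ) - 1) / 2)) * (1 / R) := by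
          have : (0:ℝ) ≤ (n : ℝ) - 1 := by linarith
          gcongr
      _ = _ := by ring

/-- The pointwise bound of `w` by the `L¹` norms of the data. -/
lemma wave_L1_bound {n : ℕ} (hn : 2 ≤ n) {R : ℝ} (hR : 0 < R) {f g : Euc n → ℝ}
    {w : ℝ → Euc n → ℝ} (hw : IsWaveSol n R f g w) {T : ℝ} {x : Euc n}
    (hx : 2 * R ≤ |T| - ‖x‖) :
    (n - 1) * |w T x| * mass n ≤ (|T| * ((|T| - ‖x‖) / 2)) ^ (-(((n : ℝ) - 1) / 2)) *
      ((∫ y, |g y|) + (n - 1) / R * ∫ y, |f y|) := by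
  have hn' : (2 : ℝ) ≤ n := by exact_mod_cast hn
  have hcT : HasCompactSupport (w T) := (isCompact_closedBall (0 : Euc n) _).of_isClosed_subset
    (isClosed_tsupport _) (hw.fin_prop T)
  have hcf : HasCompactSupport f := (isCompact_closedBall (0 : Euc n) _).of_isClosed_subset
    (isClosed_tsupport _) hw.supp_f
  have hcg : HasCompactSupport g := (isCompact_closedBall (0 : Euc n) _).of_isClosed_subset
    (isClosed_tsupport _) hw.supp_g
  have hif : Integrable fun y => |f y| :=
    (hw.smooth_f.continuous.integrable_of_hasCompactSupport hcf).abs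
  have hig : Integrable fun y => |g y| :=
    (hw.smooth_g.continuous.integrable_of_hasCompactSupport hcg).abs
  set D := (|T| * ((|T| - ‖x‖) / 2)) ^ (-(((n : ℝ) - 1) / 2)) with hD
  have main := le_of_poisson_bound (B := D * ((∫ y, |g y|) + (n - 1) / R * ∫ y, |f y|) / (n - 1))
    (contDiff_slice hw.smooth_w T).continuous hcT x ?_
  · rw [le_div_iff₀ (by linarith)] at main
    linarith
  intro ε hε
  rw [le_div_iff₀ (by linarith)]
  have hpair := pairing_const hw.smooth_w (contDiff_ker (T := T) hε x) hw.wave_eq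
    (wave_ker hε x) hw.fin_prop T
  simp only [ker_self, mul_zero, zero_sub, pt_ker_self hε, hw.init_pos, hw.init_vel] at hpair
  -- At time `T` only the velocity of the kernel contributes to the pairing.
  have hL : ∫ y, -(w T y * ((n - 1) * (ε * (‖y - x‖ ^ 2 + ε ^ 2) ^ (-((n : ℝ) + 1) / 2))))
      = -((n - 1) * ∫ y, w T y * (ε * (‖y - x‖ ^ 2 + ε ^ 2) ^ (-((n : ℝ) + 1) / 2))) := by
    rw [← integral_const_mul, ← integral_neg]
    congr 1
    ext y
    ring
  have hbd : ‖∫ y, (g y * ker T ε x 0 y - f y * pt (ker T ε x) 0 y)‖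
      ≤ ∫ y, (D * |g y| + D * ((n - 1) / R) * |f y|) := by
    refine norm_integral_le_of_norm_le ((hig.const_mul _).add (hif.const_mul _))
      (Filter.Eventually.of_forall fun y => ?_)
    by_cases hy : y ∈ Metric.closedBall (0 : Euc n) R
    · obtain ⟨h1, h2⟩ := ker_bounds hn hR hε hx (by simpa using hy)
      rw [← hD] at h1 h2
      calc ‖g y * ker T ε x 0 y - f y * pt (ker T ε x) 0 y‖
          ≤ |g y| * |ker T ε x 0 y| + |f y| * |pt (ker T ε x) 0 y| := by
            rw [← abs_mul, ← abs_mul]; exact norm_sub_le _ _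
        _ ≤ |g y| * D + |f y| * ((n - 1) / R * D) := by gcongr
        _ = _ := by ring
    · rw [image_eq_zero_of_notMem_tsupport fun h => hy (hw.supp_f h),
        image_eq_zero_of_notMem_tsupport fun h => hy (hw.supp_g h)]
      simp
  rw [← hpair, hL, norm_neg, norm_mul, Real.norm_of_nonneg (by linarith : (0:ℝ) ≤ n - 1),
    integral_add (hig.const_mul _) (hif.const_mul _), integral_const_mul, integral_const_mul,
    Real.norm_eq_abs] at hbd
  linarith

/-! ### The weighted estimate -/

/-- Weighted pointwise dispersive estimate for `w` (estimate (3.6)). -/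
theorem weighted_dispersive_estimate {n : ℕ} (hn : 2 ≤ n) {R : ℝ} (hR : 0 < R) :
    ∃ C : ℝ, 0 < C ∧ ∀ (f g : Euc n → ℝ) (w : ℝ → Euc n → ℝ),
      IsWaveSol n R f g w → ∀ (t : ℝ) (x : Euc n), 2 * R ≤ |t| - ‖x‖ →
        (|t| - ‖x‖) ^ (((n : ℝ) - 1) / 2) * |w t x|
          ≤ C * |t| ^ (-(((n : ℝ) - 1) / 2)) * (L2norm f + L2norm g) := by
  have hn' : (2 : ℝ) ≤ n := by exact_mod_cast hn
  obtain ⟨V, hV, hCS⟩ := exists_L1_le_L2 n R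
  have hm := mass_pos n
  have hn1 : (0 : ℝ) < n - 1 := by linarith
  set β : ℝ := -(((n : ℝ) - 1) / 2) with hβ
  refine ⟨(1 / 2) ^ β * (V * (1 + (n - 1) / R)) / ((n - 1) * mass n), by positivity, ?_⟩
  intro f g w hw t x hx
  have hx0 : 0 ≤ ‖x‖ := norm_nonneg x
  have ht : 0 < |t| := by linarith
  have hd : 0 < |t| - ‖x‖ := by linarith
  have hL := wave_L1_bound hn hR hw hx
  have hf := hCS f hw.smooth_f.continuous hw.supp_f
  have hg := hCS g hw.smooth_g.continuous hw.supp_g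
  have hf0 : 0 ≤ L2norm f := Real.rpow_nonneg (integral_nonneg fun y => sq_nonneg _) _
  have hg0 : 0 ≤ L2norm g := Real.rpow_nonneg (integral_nonneg fun y => sq_nonneg _) _
  have hsum : (∫ y, |g y|) + (n - 1) / R * ∫ y, |f y|
      ≤ V * (1 + (n - 1) / R) * (L2norm f + L2norm g) := by
    have h1 : (n - 1) / R * ∫ y, |f y| ≤ (n - 1) / R * (V * L2norm f) := by gcongr
    have h2 : 0 ≤ V * L2norm f := by positivity
    have h3 : 0 ≤ (n - 1) / R * (V * L2norm g) := by positivity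
    linarith
  rw [← hβ, show |t| * ((|t| - ‖x‖) / 2) = (1 / 2) * |t| * (|t| - ‖x‖) by ring,
    Real.mul_rpow (by positivity) hd.le, Real.mul_rpow (by norm_num) ht.le] at hL
  have hcancel : (|t| - ‖x‖) ^ (((n : ℝ) - 1) / 2) * (|t| - ‖x‖) ^ β = 1 := by
    rw [← Real.rpow_add hd, hβ, add_neg_cancel, Real.rpow_zero]
  rw [div_mul_eq_mul_div, div_mul_eq_mul_div, le_div_iff₀ (by positivity)]
  calc (|t| - ‖x‖) ^ (((n : ℝ) - 1) / 2) * |w t x| * ((n - 1) * mass n)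
      = (|t| - ‖x‖) ^ (((n : ℝ) - 1) / 2) * ((n - 1) * |w t x| * mass n) := by ring
    _ ≤ (|t| - ‖x‖) ^ (((n : ℝ) - 1) / 2) * ((1 / 2) ^ β * |t| ^ β * (|t| - ‖x‖) ^ β *
          (V * (1 + (n - 1) / R) * (L2norm f + L2norm g))) := by
        refine mul_le_mul_of_nonneg_left (hL.trans ?_) (by positivity)
        gcongr
    _ = ((|t| - ‖x‖) ^ (((n : ℝ) - 1) / 2) * (|t| - ‖x‖) ^ β) *
          ((1 / 2) ^ β * |t| ^ β * (V * (1 + (n - 1) / R) * (L2norm f + L2norm g))) := by ring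
    _ = _ := by rw [hcancel]; ring
end
end

section
/- Let n ≥ 2, let 0 ≤ γ ≤ (n−1)/2, and let β ∈ C_c^∞(ℝⁿ) be supported in {|x| ≤ 1}. There is a constant C (depending only on n, γ and β) such that for every τ > 0 and every ξ ∈ ℝⁿ, |ξ|^{2γ} ∫_{{|η| = τ}} |β̂(ξ − η)| dσ_τ(η) ≤ C τ^{2γ}, where σ_τ denotes the (n−1)-dimensional surface measure on the sphere {η ∈ ℝⁿ : |η| = τ}. -/
/-!
The transform of a test function decays rapidly, so the surface integral is dominated by the
integral over the sphere of radius `τ` of the weight `(1 + |ξ - η|)^(-(n+1))`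
(`ftransform_decay`), and only this weight matters.

If `|ξ| ≤ 2τ`, the factor `|ξ|^(2γ)` is at most a constant times `τ^(2γ)`, and it suffices to bound
the surface integral uniformly in `τ` and `ξ` (`sphere_japanese_bound`). Moving `η` radially by at
most one unit changes the weight by at most the factor `2^(n+1)`, so averaging over radii in
`(τ, τ + 1]` and passing to polar coordinates bounds the surface integral by a constant times the
integral of the weight over `ℝⁿ`, which is finite and translation invariant.

If `|ξ| > 2τ`, then `|ξ - η| ≥ |ξ| / 2` on the sphere, whose total area is a constant times
`τ^(n-1)` (`sphere_far_bound`), and the decay in `|ξ|` together with `2γ ≤ n - 1` gives the claim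
(`far_power_count`).
-/

noncomputable section
open MeasureTheory Real
open scoped RealInnerProductSpace BigOperators ENNReal

/-- The Fourier transform `β̂(ξ) = ∫ e^{−i x·ξ} β(x) dx`. -/
def ftransform {n : ℕ} (h : Euc n → ℝ) (ξ : Euc n) : ℂ :=
  ∫ x, Complex.exp (-Complex.I * (⟪x, ξ⟫ : ℂ)) * (h x : ℂ)

/-- The `(n−1)`-dimensional surface measure on the sphere `{|η| = τ}` in `ℝⁿ`,
realized as a measure on `ℝⁿ`: the surface measure of the unit sphere, scaled
by the factor `τ^{n−1}` and pushed forward under `ω ↦ τ • ω`. -/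
def sphereMeasure (n : ℕ) (τ : ℝ) : Measure (Euc n) :=
  ENNReal.ofReal (τ ^ (n - 1)) •
    Measure.map (fun ω : Metric.sphere (0 : Euc n) 1 => τ • (ω : Euc n))
      (volume : Measure (Euc n)).toSphere

/-- The transform decays faster than any power, since it is Mathlib's Fourier transform of a
Schwartz function up to the dilation by `(2π)⁻¹` that reconciles the two normalizations. -/
theorem ftransform_decay {n : ℕ} (β : Euc n → ℝ) (hβ : ContDiff ℝ (⊤ : ℕ∞) β)
    (hβc : HasCompactSupport β) (N : ℕ) :
    ∃ C : ℝ, 0 < C ∧ ∀ ζ : Euc n, ‖ftransform β ζ‖ ≤ C * ((1 + ‖ζ‖) ^ N)⁻¹ := by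
  have hsmooth : ContDiff ℝ (⊤ : ℕ∞) (fun x => (β x : ℂ)) :=
    Complex.ofRealCLM.contDiff.comp hβ
  have hcomp : HasCompactSupport (fun x => (β x : ℂ)) :=
    hβc.comp_left (g := fun t : ℝ => (t : ℂ)) Complex.ofReal_zero
  let F : SchwartzMap (Euc n) ℂ := FourierTransform.fourier (hcomp.toSchwartzMap hsmooth)
  have hF : ∀ ζ : Euc n, ftransform β ζ = F ((2 * π)⁻¹ • ζ) := by
    intro ζ
    have : F ((2 * π)⁻¹ • ζ)
        = FourierTransform.fourier (fun x => (β x : ℂ)) ((2 * π)⁻¹ • ζ) := rfl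
    rw [this, Real.fourier_eq', ftransform]
    refine integral_congr_ae (Filter.Eventually.of_forall fun x => ?_)
    simp only [inner_smul_right, smul_eq_mul]
    congr 2
    have h2 : (-2 * π * ((2 * π)⁻¹ * ⟪x, ζ⟫)) = -⟪x, ζ⟫ := by
      field_simp
    rw [h2]
    push_cast
    ring
  obtain ⟨A, hA⟩ : ∃ A : ℝ, ∀ w : Euc n, (1 + ‖w‖) ^ N * ‖F w‖ ≤ A :=
    ⟨_, fun w => by
      simpa using SchwartzMap.one_add_le_sup_seminorm_apply (𝕜 := ℝ) (m := (N, 0))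
        le_rfl le_rfl F w⟩
  have hA0 : 0 ≤ A := le_trans (by positivity) (hA 0)
  refine ⟨(2 * π) ^ N * (A + 1), by positivity, fun ζ => ?_⟩
  rw [← div_eq_mul_inv, le_div_iff₀ (by positivity), hF]
  have h1 : 1 + ‖ζ‖ ≤ (2 * π) * (1 + ‖(2 * π)⁻¹ • ζ‖) := by
    rw [norm_smul, Real.norm_of_nonneg (by positivity), mul_add, ← mul_assoc,
      mul_inv_cancel₀ (by positivity)]
    linarith [Real.pi_gt_three]
  calc ‖F ((2 * π)⁻¹ • ζ)‖ * (1 + ‖ζ‖) ^ N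
      ≤ ‖F ((2 * π)⁻¹ • ζ)‖ * ((2 * π) * (1 + ‖(2 * π)⁻¹ • ζ‖)) ^ N := by gcongr
    _ = (2 * π) ^ N * ((1 + ‖(2 * π)⁻¹ • ζ‖) ^ N * ‖F ((2 * π)⁻¹ • ζ)‖) := by
        rw [mul_pow]; ring
    _ ≤ (2 * π) ^ N * (A + 1) := by
        gcongr
        linarith [hA ((2 * π)⁻¹ • ζ)]

/-- Integration in polar coordinates. -/
theorem lintegral_polar {n : ℕ} (hn : 1 ≤ n) {f : Euc n → ℝ≥0∞} (hf : Measurable f) :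
    ∫⁻ y, f y = ∫⁻ ω, (∫⁻ r in Set.Ioi (0 : ℝ), ENNReal.ofReal (r ^ (n - 1)) *
      f (r • (ω : Euc n))) ∂(volume : Measure (Euc n)).toSphere := by
  have : Nonempty (Fin n) := ⟨⟨0, hn⟩⟩
  have hdim : Module.finrank ℝ (Euc n) = n := by simp
  have hmp := (volume : Measure (Euc n)).measurePreserving_homeomorphUnitSphereProd
  rw [hdim] at hmp
  have hg : Measurable fun p : Metric.sphere (0 : Euc n) 1 × Set.Ioi (0 : ℝ) =>
      f ((p.2 : ℝ) • (p.1 : Euc n)) := hf.comp (by fun_prop)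
  calc ∫⁻ y, f y = ∫⁻ y in ({0}ᶜ : Set (Euc n)), f y := by
        rw [restrict_compl_singleton]
    _ = ∫⁻ y : ({0}ᶜ : Set (Euc n)), f y ∂(Measure.comap Subtype.val volume) :=
        (lintegral_subtype_comap (measurableSet_singleton _).compl f).symm
    _ = ∫⁻ p, f ((p.2 : ℝ) • (p.1 : Euc n))
          ∂((volume : Measure (Euc n)).toSphere.prod (Measure.volumeIoiPow (n - 1))) := by
        rw [← hmp.lintegral_comp_emb (Homeomorph.measurableEmbedding _)]
        refine lintegral_congr fun y => ?_
        congr 1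
        have h0 : ‖(y : Euc n)‖ ≠ 0 := norm_ne_zero_iff.2 y.2
        simp [smul_smul, h0]
    _ = _ := by
        rw [lintegral_prod _ hg.aemeasurable]
        refine lintegral_congr fun ω => ?_
        have hω : Measurable fun r : Set.Ioi (0 : ℝ) => f ((r : ℝ) • (ω : Euc n)) :=
          hf.comp (by fun_prop)
        rw [Measure.volumeIoiPow, lintegral_withDensity_eq_lintegral_mul _ (by fun_prop) hω]
        exact lintegral_subtype_comap measurableSet_Ioi
          (fun r : ℝ => ENNReal.ofReal (r ^ (n - 1)) * f (r • (ω : Euc n)))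

theorem lintegral_sphereMeasure {n : ℕ} (τ : ℝ) {f : Euc n → ℝ≥0∞} (hf : Measurable f) :
    ∫⁻ η, f η ∂(sphereMeasure n τ) = ENNReal.ofReal (τ ^ (n - 1)) *
      ∫⁻ ω, f (τ • (ω : Euc n)) ∂(volume : Measure (Euc n)).toSphere := by
  rw [sphereMeasure, lintegral_smul_measure, lintegral_map hf (by fun_prop), smul_eq_mul]

/-- Uniform bound, in radius and translation, for the surface integral of an integrable weight.
Since the weight varies by at most a constant factor over unit distances, the sphere can be
thickened to the shell `τ < |y| ≤ τ + 1`, and the integral over the shell is at most the one over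
the whole space. -/
theorem sphere_japanese_bound {n : ℕ} (hn : 1 ≤ n) :
    ∃ K : ℝ≥0∞, K ≠ ∞ ∧ ∀ τ : ℝ, 0 < τ → ∀ ξ : Euc n,
      ∫⁻ η, ENNReal.ofReal (((1 + ‖ξ - η‖) ^ (n + 1))⁻¹) ∂(sphereMeasure n τ) ≤ K := by
  set G : Euc n → ℝ≥0∞ := fun ζ => ENNReal.ofReal (((1 + ‖ζ‖) ^ (n + 1))⁻¹) with hG
  have hGm : Measurable G := by fun_prop
  have hfin : ∫⁻ y, G y < ∞ := by
    have := finite_integral_one_add_norm (E := Euc n) (μ := volume) (r := (n : ℝ) + 1)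
      (by simp)
    convert this using 4 with y
    rw [Real.rpow_neg (by positivity)]
    norm_cast
  refine ⟨ENNReal.ofReal (2 ^ (n + 1)) * ∫⁻ y, G y,
    ENNReal.mul_ne_top ENNReal.ofReal_ne_top hfin.ne, fun τ hτ ξ => ?_⟩
  have hpt : ∀ (ω : Metric.sphere (0 : Euc n) 1) (r : ℝ), r ∈ Set.Ioc τ (τ + 1) →
      G (ξ - τ • (ω : Euc n)) ≤ ENNReal.ofReal (2 ^ (n + 1)) * G (ξ - r • (ω : Euc n)) := by
    intro ω r hr
    rw [hG, ← ENNReal.ofReal_mul (by positivity)]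
    refine ENNReal.ofReal_le_ofReal ?_
    have hω : ‖(ω : Euc n)‖ = 1 := by simp
    have h1 : ‖ξ - r • (ω : Euc n)‖ ≤ ‖ξ - τ • (ω : Euc n)‖ + 1 := by
      have : ξ - r • (ω : Euc n) = (ξ - τ • (ω : Euc n)) - (r - τ) • (ω : Euc n) := by
        module
      rw [this]
      refine (norm_sub_le _ _).trans ?_
      rw [norm_smul, hω, Real.norm_of_nonneg (by linarith [hr.1])]
      linarith [hr.2]
    rw [← div_eq_mul_inv, inv_eq_one_div, div_le_div_iff₀ (by positivity) (by positivity),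
      one_mul, ← mul_pow]
    gcongr
    linarith [norm_nonneg (ξ - τ • (ω : Euc n))]
  have hGξ : Measurable fun y => G (ξ - y) := hGm.comp (by fun_prop)
  rw [lintegral_sphereMeasure τ hGξ, ← lintegral_const_mul' _ _ ENNReal.ofReal_ne_top,
    ← lintegral_sub_left_eq_self G ξ, lintegral_polar hn hGξ,
    ← lintegral_const_mul' _ _ ENNReal.ofReal_ne_top]
  refine lintegral_mono fun ω => ?_
  calc ENNReal.ofReal (τ ^ (n - 1)) * G (ξ - τ • (ω : Euc n))
      = ∫⁻ _ in Set.Ioc τ (τ + 1),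
          ENNReal.ofReal (τ ^ (n - 1)) * G (ξ - τ • (ω : Euc n)) := by simp
    _ ≤ ∫⁻ r in Set.Ioc τ (τ + 1), ENNReal.ofReal (2 ^ (n + 1)) *
          (ENNReal.ofReal (r ^ (n - 1)) * G (ξ - r • (ω : Euc n))) := by
        refine setLIntegral_mono' measurableSet_Ioc fun r hr => ?_
        rw [mul_left_comm]
        gcongr
        · exact hr.1.le
        · exact hpt ω r hr
    _ ≤ ∫⁻ r in Set.Ioi (0 : ℝ), ENNReal.ofReal (2 ^ (n + 1)) *
          (ENNReal.ofReal (r ^ (n - 1)) * G (ξ - r • (ω : Euc n))) :=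
        lintegral_mono_set fun r hr => hτ.trans hr.1
    _ = _ := lintegral_const_mul' _ _ ENNReal.ofReal_ne_top

/-- When `|ξ| > 2τ` every point of the sphere is at distance at least `|ξ| / 2` from `ξ`, so the
weight is dominated pointwise. -/
theorem sphere_far_bound {n : ℕ} {τ : ℝ} (hτ : 0 < τ) {ξ : Euc n} (hξ : 2 * τ < ‖ξ‖) :
    ∫⁻ η, ENNReal.ofReal (((1 + ‖ξ - η‖) ^ (n + 1))⁻¹) ∂(sphereMeasure n τ) ≤
      ENNReal.ofReal (τ ^ (n - 1) * (2 ^ (n + 1) * ((1 + ‖ξ‖) ^ (n + 1))⁻¹)) *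
        (volume : Measure (Euc n)).toSphere Set.univ := by
  rw [lintegral_sphereMeasure τ (by fun_prop), ENNReal.ofReal_mul (by positivity), mul_assoc,
    ← lintegral_const]
  gcongr with ω
  have hω : ‖(ω : Euc n)‖ = 1 := by simp
  have h1 : ‖ξ‖ - τ ≤ ‖ξ - τ • (ω : Euc n)‖ := by
    have := norm_sub_norm_le ξ (τ • (ω : Euc n))
    rwa [norm_smul, hω, Real.norm_of_nonneg hτ.le, mul_one] at this
  rw [← div_eq_mul_inv, inv_eq_one_div, div_le_div_iff₀ (by positivity) (by positivity),
    one_mul, ← mul_pow]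
  gcongr
  linarith

/-- The power count for `|ξ| > 2τ`. As `2γ ≤ m`, the surplus power `τ ^ (m - 2γ)` can be traded
for the same power of `|ξ|`; this holds for small `τ` as well. -/
theorem far_power_count {m : ℕ} {γ τ x : ℝ} (hγ : 2 * γ ≤ m)
    (hτ : 0 < τ) (hx : τ ≤ x) :
    x ^ (2 * γ) * (τ ^ m * ((1 + x) ^ (m + 2))⁻¹) ≤ τ ^ (2 * γ) := by
  have hx0 : 0 < x := hτ.trans_le hx
  have h1 : τ ^ m = τ ^ (2 * γ) * τ ^ ((m : ℝ) - 2 * γ) := by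
    rw [← Real.rpow_add hτ, ← Real.rpow_natCast]; congr 1; ring
  have h2 : x ^ m = x ^ (2 * γ) * x ^ ((m : ℝ) - 2 * γ) := by
    rw [← Real.rpow_add hx0, ← Real.rpow_natCast]; congr 1; ring
  have h3 : τ ^ ((m : ℝ) - 2 * γ) ≤ x ^ ((m : ℝ) - 2 * γ) :=
    Real.rpow_le_rpow hτ.le hx (by linarith)
  have h4 : x ^ m ≤ (1 + x) ^ (m + 2) :=
    (pow_le_pow_left₀ hx0.le (by linarith) m).trans
      (pow_le_pow_right₀ (by linarith) (by omega))
  calc x ^ (2 * γ) * (τ ^ m * ((1 + x) ^ (m + 2))⁻¹)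
      = τ ^ (2 * γ) * ((x ^ (2 * γ) * τ ^ ((m : ℝ) - 2 * γ)) * ((1 + x) ^ (m + 2))⁻¹) := by
        rw [h1]; ring
    _ ≤ τ ^ (2 * γ) * ((x ^ (2 * γ) * x ^ ((m : ℝ) - 2 * γ)) * ((1 + x) ^ (m + 2))⁻¹) := by
        gcongr
    _ = τ ^ (2 * γ) * (x ^ m * ((1 + x) ^ (m + 2))⁻¹) := by rw [← h2]
    _ ≤ τ ^ (2 * γ) * 1 := by
        gcongr
        exact mul_inv_le_one_of_le₀ h4 (by positivity)
    _ = τ ^ (2 * γ) := mul_one _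

/-- The key spherical convolution bound (4.1). -/
theorem spherical_convolution_bound {n : ℕ} (hn : 2 ≤ n)
    {γ : ℝ} (hγ0 : 0 ≤ γ) (hγ1 : γ ≤ ((n : ℝ) - 1) / 2)
    (β : Euc n → ℝ) (hβ : ContDiff ℝ (⊤ : ℕ∞) β) (hβc : HasCompactSupport β)
    (hβsupp : tsupport β ⊆ Metric.closedBall 0 1) :
    ∃ C : ℝ, 0 < C ∧ ∀ (τ : ℝ), 0 < τ → ∀ ξ : Euc n,
      ‖ξ‖ ^ (2 * γ) * (∫ η, ‖ftransform β (ξ - η)‖ ∂(sphereMeasure n τ))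
        ≤ C * τ ^ (2 * γ) := by
  obtain ⟨A, hA0, hA⟩ := ftransform_decay β hβ hβc (n + 1)
  obtain ⟨K, hK, hKb⟩ := sphere_japanese_bound (n := n) (by omega)
  set S : ℝ≥0∞ := (volume : Measure (Euc n)).toSphere Set.univ with hS
  have hSfin : S ≠ ∞ := measure_ne_top _ _
  -- The Bochner integral is compared with a lower integral, which requires no measurability of
  -- the integrand.
  have key : ∀ (τ : ℝ) (ξ : Euc n) (L : ℝ≥0∞), L ≠ ∞ →
      ∫⁻ η, ENNReal.ofReal (((1 + ‖ξ - η‖) ^ (n + 1))⁻¹) ∂(sphereMeasure n τ) ≤ L →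
      ∫ η, ‖ftransform β (ξ - η)‖ ∂(sphereMeasure n τ) ≤ A * L.toReal := by
    intro τ ξ L hL hle
    have h1 := norm_integral_le_lintegral_norm (μ := sphereMeasure n τ)
      (fun η => ‖ftransform β (ξ - η)‖)
    have h2 : ∫⁻ η, ENNReal.ofReal ‖‖ftransform β (ξ - η)‖‖ ∂(sphereMeasure n τ)
        ≤ ENNReal.ofReal A * L := by
      refine le_trans ?_ (mul_le_mul_right hle (ENNReal.ofReal A))
      rw [← lintegral_const_mul' _ _ ENNReal.ofReal_ne_top]
      refine lintegral_mono fun η => ?_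
      rw [← ENNReal.ofReal_mul hA0.le, norm_norm]
      exact ENNReal.ofReal_le_ofReal (hA _)
    have h3 := ENNReal.toReal_mono (ENNReal.mul_ne_top ENNReal.ofReal_ne_top hL) h2
    rw [ENNReal.toReal_mul, ENNReal.toReal_ofReal hA0.le] at h3
    exact (le_abs_self _).trans (h1.trans h3)
  have hK0 : 0 ≤ K.toReal := ENNReal.toReal_nonneg
  have hS0 : 0 ≤ S.toReal := ENNReal.toReal_nonneg
  refine ⟨2 ^ (2 * γ) * (A * K.toReal) + A * (2 ^ (n + 1) * S.toReal) + 1, by positivity,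
    fun τ hτ ξ => ?_⟩
  rcases le_or_gt ‖ξ‖ (2 * τ) with hξ | hξ
  · have hb := key τ ξ K hK (hKb τ hτ ξ)
    calc _ ≤ (2 * τ) ^ (2 * γ) * (A * K.toReal) := by gcongr
      _ = (2 ^ (2 * γ) * (A * K.toReal)) * τ ^ (2 * γ) := by
          rw [Real.mul_rpow (by norm_num) hτ.le]; ring
      _ ≤ _ := by
          gcongr
          have : 0 ≤ A * (2 ^ (n + 1) * S.toReal) := by positivity
          linarith
  · have hb := key τ ξ _ (ENNReal.mul_ne_top ENNReal.ofReal_ne_top hSfin)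
      (sphere_far_bound hτ hξ)
    rw [ENNReal.toReal_mul, ENNReal.toReal_ofReal (by positivity)] at hb
    obtain ⟨m, rfl⟩ : ∃ m, n = m + 1 := ⟨n - 1, by omega⟩
    have hp := far_power_count (m := m) (γ := γ) (τ := τ) (x := ‖ξ‖)
      (by push_cast at hγ1; linarith) hτ (by linarith)
    rw [Nat.add_sub_cancel] at hb
    calc _ ≤ ‖ξ‖ ^ (2 * γ) * (A * (τ ^ m * (2 ^ (m + 1 + 1) *
            ((1 + ‖ξ‖) ^ (m + 1 + 1))⁻¹) * S.toReal)) := by gcongr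
      _ = (A * (2 ^ (m + 1 + 1) * S.toReal)) *
            (‖ξ‖ ^ (2 * γ) * (τ ^ m * ((1 + ‖ξ‖) ^ (m + 2))⁻¹)) := by ring
      _ ≤ (A * (2 ^ (m + 1 + 1) * S.toReal)) * τ ^ (2 * γ) := by gcongr
      _ ≤ _ := by
          gcongr
          have : 0 ≤ (2 : ℝ) ^ (2 * γ) * (A * K.toReal) := by positivity
          linarith
end
end

section
/- Let n ≥ 2, let 0 ≤ γ ≤ (n−1)/2, and let 1 ≤ r ≤ 2 and 1 ≤ s ≤ 2. Let F : ℝ × ℝⁿ → ℂ be Schwartz and vanish for t < 0, and let w be the forward (Duhamel) solution of □w = F with zero data, given on the spatial Fourier side by ŵ(t,ξ) = ∫_0^t (sin((t−s)|ξ|)/|ξ|) F̂(s,ξ) ds. Assume the energy part of the global Minkowski Strichartz estimate: there is C₀ such that sup_t ( ‖w(t,·)‖_{Ḣ^γ(ℝⁿ)} + ‖∂_t w(t,·)‖_{Ḣ^{γ−1}(ℝⁿ)} ) ≤ C₀ ‖F‖_{L^r_t L^s_x(ℝ×ℝⁿ)} for all such F. Then there is a constant C such that ∫_{ℝⁿ}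 |η|^{2γ−2} | F̃(|η|,η) |² dη ≤ C C₀² ‖F‖²_{L^r_t L^s_x(ℝ×ℝⁿ)}, where F̃(τ,η) = ∫_ℝ e^{−i s τ} F̂(s,η) ds is the space-time Fourier transform of F. -/
/-!
Fix `F` and put `ρ = ‖ξ‖`, `G(ξ) = F̃(ρ, ξ)`, `K = C₀ ‖F‖_{L^r L^s}`. For large `t`,
`ρ ŵ(t, ξ)` is asymptotic to `(e^{itρ} G(ξ) - e^{-itρ} F̃(-ρ, ξ)) / 2i`. The combination
`e^{ihρ} ŵ(t + h) - ŵ(t)` cancels the second wave, and its modulus, multiplied by `ρ`, tends to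
`|sin (hρ)| ‖G‖` as `t → ∞` (`tendsto_norm_two_times`). The `Ḣ^γ` bound at the two times `t` and
`t + h` together with Fatou's lemma gives, for every `h ≥ 0`,
`∫ sin² (hρ) ρ^{2γ-2} ‖G‖² ≤ 4 K²` (`lintegral_two_times_le`). Averaging over `h` in a long interval
replaces `sin²` by `1 / 2` (`lintegral_le_of_oscillating`), hence the constant `C = 8`.

The argument rests on the bound for `w` rather than `∂_t w`: for `γ ≥ 0` the weight `ρ^{2γ}` is
locally bounded, so the integral in `sobHat γ` converges (`integrable_sobolev_duhamelHat`), whereas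
for `n = 2`, `γ = 0` the integral defining the `Ḣ^{γ-1}` norm of `∂_t w` may diverge at the origin,
in which case `sobHat (γ - 1)` takes the value `0` and carries no information. Convergence at
infinity follows from the rapid decay of `ξ ↦ ∫ |F̂(s, ξ)| ds` (`spatialFT_decay`).
-/

noncomputable section
open MeasureTheory Real
open scoped RealInnerProductSpace BigOperators SchwartzMap

/-- The Fourier transform in the spatial variable,
`F̂(s,η) = ∫ e^{−i x·η} F(s,x) dx`. -/
def spatialFT {n : ℕ} (F : ℝ × Euc n → ℂ) (s : ℝ) (η : Euc n) : ℂ :=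
  ∫ x, Complex.exp (-Complex.I * (⟪x, η⟫ : ℂ)) * F (s, x)

/-- The forward (Duhamel) solution of `□w = F` with zero data, on the spatial
Fourier side: `ŵ(t,ξ) = ∫_0^t (sin((t−s)|ξ|)/|ξ|) F̂(s,ξ) ds`. -/
def duhamelHat {n : ℕ} (F : ℝ × Euc n → ℂ) (t : ℝ) (ξ : Euc n) : ℂ :=
  ∫ s in (0 : ℝ)..t, ((Real.sin ((t - s) * ‖ξ‖) / ‖ξ‖ : ℝ) : ℂ) * spatialFT F s ξ

/-- The `Ḣ^γ` norm computed from a function given on the Fourier side. -/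
def sobHat {n : ℕ} (γ : ℝ) (h : Euc n → ℂ) : ℝ :=
  (∫ ξ, ‖ξ‖ ^ (2 * γ) * ‖h ξ‖ ^ 2) ^ (1/2 : ℝ)

/-- The mixed norm `‖F‖_{L^r_t L^s_x(ℝ×ℝⁿ)}` for finite exponents. -/
def LrLsNorm {n : ℕ} (F : ℝ × Euc n → ℂ) (r s : ℝ) : ℝ :=
  (∫ t : ℝ, ((∫ x, ‖F (t, x)‖ ^ s) ^ (1/s)) ^ r) ^ (1/r)

/-- The space–time Fourier transform `F̃(τ,η) = ∫ e^{−i s τ} F̂(s,η) ds`. -/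
def spacetimeFT {n : ℕ} (F : ℝ × Euc n → ℂ) (τ : ℝ) (η : Euc n) : ℂ :=
  ∫ s : ℝ, Complex.exp (-Complex.I * ((s * τ : ℝ) : ℂ)) * spatialFT F s η

/-! ### Decay of the spatial Fourier transform -/

theorem norm_iteratedFDeriv_slice_le {n : ℕ} (F : 𝓢(ℝ × Euc n, ℂ)) (s : ℝ) (j : ℕ) (x : Euc n) :
    ‖iteratedFDeriv ℝ j (fun y => F (s, y)) x‖ ≤ ‖iteratedFDeriv ℝ j F (s, x)‖ := by
  have hfun : (fun y => F (s, y))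
      = (fun z => F (z + (s, 0))) ∘ (ContinuousLinearMap.inr ℝ ℝ (Euc n)) := by
    funext y; simp
  have hsm : ContDiff ℝ j (fun z => F (z + (s, (0 : Euc n)))) :=
    (F.smooth j).comp (contDiff_id.add contDiff_const)
  rw [hfun, ContinuousLinearMap.iteratedFDeriv_comp_right _ hsm x le_rfl,
    iteratedFDeriv_comp_add_right]
  refine (ContinuousMultilinearMap.norm_compContinuousLinearMap_le _ _).trans ?_
  have h1 : ∏ _i : Fin j, ‖ContinuousLinearMap.inr ℝ ℝ (Euc n)‖ ≤ 1 :=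
    Finset.prod_le_one (fun _ _ => norm_nonneg _)
      (fun _ _ => ContinuousLinearMap.norm_inr_le_one ℝ ℝ (Euc n))
  calc _ ≤ ‖iteratedFDeriv ℝ j F (ContinuousLinearMap.inr ℝ ℝ (Euc n) x + (s, 0))‖ * 1 := by
        gcongr
    _ = _ := by simp

theorem integrable_iteratedFDeriv {n : ℕ} (F : 𝓢(ℝ × Euc n, ℂ)) (j : ℕ) :
    Integrable (fun p => ‖iteratedFDeriv ℝ j F p‖)
      ((volume : Measure ℝ).prod (volume : Measure (Euc n))) := by
  have := F.integrable_pow_mul_iteratedFDeriv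
    ((volume : Measure ℝ).prod (volume : Measure (Euc n))) 0 j
  simpa using this

theorem integrable_modulated {n : ℕ} (F : 𝓢(ℝ × Euc n, ℂ)) (η : Euc n) :
    Integrable (fun p : ℝ × Euc n => Complex.exp (-Complex.I * (⟪p.2, η⟫ : ℂ)) * F p)
      ((volume : Measure ℝ).prod (volume : Measure (Euc n))) := by
  refine Integrable.bdd_mul (c := 1) F.integrable (by fun_prop) (Filter.Eventually.of_forall ?_)
  intro p
  rw [Complex.norm_exp]
  simp

theorem integrable_spatialFT {n : ℕ} (F : 𝓢(ℝ × Euc n, ℂ)) (η : Euc n) :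
    Integrable (fun s => spatialFT (fun p => F p) s η) :=
  (integrable_modulated F η).integral_prod_left

theorem stronglyMeasurable_spatialFT {n : ℕ} (F : 𝓢(ℝ × Euc n, ℂ)) :
    StronglyMeasurable (fun p : ℝ × Euc n => spatialFT (fun p => F p) p.1 p.2) := by
  have hc : Continuous (fun q : (ℝ × Euc n) × Euc n =>
      Complex.exp (-Complex.I * (⟪q.2, q.1.2⟫ : ℂ)) * F (q.1.1, q.2)) := by
    have := F.continuous
    fun_prop
  exact hc.stronglyMeasurable.integral_prod_right'

/-- Mathlib's Fourier transform has the kernel `e^{-2πi x·w}`, whence the rescaling by `2π`. -/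
theorem spatialFT_eq_fourier {n : ℕ} (F : 𝓢(ℝ × Euc n, ℂ)) (s : ℝ) (ξ : Euc n) :
    spatialFT (fun p => F p) s ξ
      = FourierTransform.fourier (fun y => F (s, y)) ((2 * π)⁻¹ • ξ) := by
  rw [fourier_eq', spatialFT]
  congr 1
  funext x
  rw [smul_eq_mul]
  congr 2
  rw [inner_smul_right]
  push_cast
  have : (π : ℂ) ≠ 0 := by exact_mod_cast pi_ne_zero
  field_simp

/-- Rapid decay in `ξ`, integrated in time. On almost every time slice it is the usual bound of a
Fourier transform by integrals of derivatives; the slices are then integrated by Fubini. -/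
theorem spatialFT_decay {n : ℕ} (F : 𝓢(ℝ × Euc n, ℂ)) (N : ℕ) :
    ∃ C : ℝ, ∀ ξ : Euc n, ‖ξ‖ ^ N * (∫ s, ‖spatialFT (fun p => F p) s ξ‖) ≤ C := by
  refine ⟨(2 * π) ^ N * (2 ^ N * ∫ s : ℝ, ∑ j ∈ Finset.range (N + 1),
    ∫ v, ‖iteratedFDeriv ℝ j F (s, v)‖), fun ξ => ?_⟩
  have hint : Integrable (fun s : ℝ => ∑ j ∈ Finset.range (N + 1),
      ∫ v, ‖iteratedFDeriv ℝ j F (s, v)‖) :=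
    integrable_finsetSum _ fun j _ => (integrable_iteratedFDeriv F j).integral_prod_left
  have hae : ∀ᵐ s : ℝ, ∀ j : ℕ, Integrable (fun v : Euc n => ‖iteratedFDeriv ℝ j F (s, v)‖) :=
    ae_all_iff.2 fun j => (integrable_iteratedFDeriv F j).prod_right_ae
  rw [← integral_const_mul, ← integral_const_mul, ← integral_const_mul]
  refine integral_mono_ae ((integrable_spatialFT F ξ).norm.const_mul _)
    ((hint.const_mul _).const_mul _) ?_
  filter_upwards [hae] with s hs
  have hslice : ∀ j : ℕ, Integrable
      (fun v : Euc n => ‖iteratedFDeriv ℝ j (fun y => F (s, y)) v‖) := by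
    intro j
    have hsm : ContDiff ℝ j (fun y => F (s, y)) :=
      (F.smooth j).comp (contDiff_const.prodMk contDiff_id)
    refine (hs j).mono' ?_ (Filter.Eventually.of_forall fun v => ?_)
    · exact (hsm.continuous_iteratedFDeriv le_rfl).norm.aestronglyMeasurable
    · rw [norm_norm]; exact norm_iteratedFDeriv_slice_le F s j v
  have hsm : ContDiff ℝ ((N : ℕ∞) : WithTop ℕ∞) (fun y => F (s, y)) :=
    (F.smooth _).comp (contDiff_const.prodMk contDiff_id)
  have key := pow_mul_norm_iteratedFDeriv_fourier_le (K := 0) (N := N) hsm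
    (by
      intro k m hk _
      have : k = 0 := by simpa using hk
      subst this
      simpa using hslice m) (k := 0) (n := N) (by simp) le_rfl ((2 * π)⁻¹ • ξ)
  rw [norm_iteratedFDeriv_zero, ← spatialFT_eq_fourier, norm_smul, mul_pow] at key
  have h2 : ∑ p ∈ Finset.range (0 + 1) ×ˢ Finset.range (N + 1),
      ∫ v : Euc n, ‖v‖ ^ p.1 * ‖iteratedFDeriv ℝ p.2 (fun y => F (s, y)) v‖
      ≤ ∑ j ∈ Finset.range (N + 1), ∫ v, ‖iteratedFDeriv ℝ j F (s, v)‖ := by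
    rw [Finset.sum_product]
    simp only [zero_add, Finset.range_one, Finset.sum_singleton, pow_zero, one_mul]
    exact Finset.sum_le_sum fun j _ =>
      integral_mono (hslice j) (hs j) fun v => norm_iteratedFDeriv_slice_le F s j v
  have hpi : (0 : ℝ) < 2 * π := by positivity
  have hn : ‖(2 * π)⁻¹‖ = (2 * π)⁻¹ := by rw [norm_eq_abs, abs_of_pos (by positivity)]
  rw [hn] at key
  have h3 : ‖ξ‖ ^ N * ‖spatialFT (fun p => F p) s ξ‖
      = (2 * π) ^ N * ((2 * π)⁻¹ ^ N * ‖ξ‖ ^ N * ‖spatialFT (fun p => F p) s ξ‖) := by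
    rw [inv_pow]; field_simp
  calc _ = _ := h3
    _ ≤ _ := by
      refine mul_le_mul_of_nonneg_left (key.trans ?_) (by positivity)
      simp only [pow_zero, one_mul, Nat.cast_zero, mul_zero, zero_add] at h2 ⊢
      gcongr

/-! ### The Duhamel solution at a fixed time -/

theorem norm_duhamelHat_le {n : ℕ} (F : 𝓢(ℝ × Euc n, ℂ)) {t : ℝ} (ht : 0 ≤ t) (ξ : Euc n) :
    ‖duhamelHat (fun p => F p) t ξ‖ ≤ t * ∫ s, ‖spatialFT (fun p => F p) s ξ‖ := by
  have hint := integrable_spatialFT F ξ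
  refine (intervalIntegral.norm_integral_le_of_norm_le
    (g := fun s => t * ‖spatialFT (fun p => F p) s ξ‖) ht (Filter.Eventually.of_forall ?_)
    (hint.norm.const_mul t).intervalIntegrable).trans ?_
  · intro s hs
    rw [norm_mul, Complex.norm_real, norm_eq_abs, abs_div, abs_norm]
    gcongr
    refine div_le_of_le_mul₀ (norm_nonneg _) ht (abs_sin_le_abs.trans ?_)
    rw [abs_mul, abs_norm]
    gcongr
    rw [abs_le]; constructor <;> linarith [hs.1, hs.2]
  · rw [intervalIntegral.integral_const_mul, intervalIntegral.integral_of_le ht]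
    exact mul_le_mul_of_nonneg_left (setIntegral_le_integral hint.norm
      (Filter.Eventually.of_forall fun _ => norm_nonneg _)) ht

theorem stronglyMeasurable_duhamelHat {n : ℕ} (F : 𝓢(ℝ × Euc n, ℂ)) {t : ℝ} (ht : 0 ≤ t) :
    StronglyMeasurable (fun ξ => duhamelHat (fun p => F p) t ξ) := by
  have h1 : StronglyMeasurable (fun p : ℝ × Euc n =>
      ((Real.sin ((t - p.1) * ‖p.2‖) / ‖p.2‖ : ℝ) : ℂ)
        * spatialFT (fun p => F p) p.1 p.2) := by
    refine StronglyMeasurable.mul (Measurable.stronglyMeasurable ?_)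
      (stronglyMeasurable_spatialFT F)
    fun_prop
  have h2 := h1.integral_prod_left' (μ := volume.restrict (Set.Ioc 0 t))
  convert h2 using 2 with ξ
  rw [duhamelHat, intervalIntegral.integral_of_le ht]

theorem stronglyMeasurable_spacetimeFT {n : ℕ} (F : 𝓢(ℝ × Euc n, ℂ)) :
    StronglyMeasurable (fun η => spacetimeFT (fun p => F p) ‖η‖ η) := by
  have h1 : StronglyMeasurable (fun p : ℝ × Euc n =>
      Complex.exp (-Complex.I * ((p.1 * ‖p.2‖ : ℝ) : ℂ))
        * spatialFT (fun p => F p) p.1 p.2) := by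
    refine StronglyMeasurable.mul (Continuous.stronglyMeasurable (by fun_prop))
      (stronglyMeasurable_spatialFT F)
  exact h1.integral_prod_left' (μ := volume)

/-- The integral behind `sobHat γ` of the Duhamel solution converges, so that the Bochner integral
in `sobHat` is the genuine one. -/
theorem integrable_sobolev_duhamelHat {n : ℕ} (F : 𝓢(ℝ × Euc n, ℂ)) {γ : ℝ} (hγ : 0 ≤ γ)
    {t : ℝ} (ht : 0 ≤ t) :
    Integrable (fun ξ : Euc n => ‖ξ‖ ^ (2 * γ) * ‖duhamelHat (fun p => F p) t ξ‖ ^ 2) := by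
  obtain ⟨M, hM⟩ := exists_nat_ge (γ + n + 1)
  obtain ⟨C₁, hC₁⟩ := spatialFT_decay F 0
  obtain ⟨C₂, hC₂⟩ := spatialFT_decay F M
  have hjap : Integrable (fun ξ : Euc n => (1 + ‖ξ‖) ^ (-(n + 1 : ℝ))) :=
    integrable_one_add_norm (by simp)
  refine (hjap.const_mul ((t * (2 ^ M * (C₁ + C₂))) ^ 2)).mono' ?_
    (Filter.Eventually.of_forall fun ξ => ?_)
  · have hm := (stronglyMeasurable_duhamelHat F ht).measurable
    exact Measurable.aestronglyMeasurable (by fun_prop)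
  -- `A` is bounded by `C₁` for small `ξ` and by `C₂ ‖ξ‖ ^ (-M)` for large `ξ`.
  set A := ∫ s, ‖spatialFT (fun p => F p) s ξ‖ with hA
  have hA0 : 0 ≤ A := integral_nonneg fun _ => norm_nonneg _
  have hx : (0 : ℝ) ≤ ‖ξ‖ := norm_nonneg ξ
  have hdec : (1 + ‖ξ‖) ^ M * A ≤ 2 ^ M * (C₁ + C₂) := by
    have e : (1 + ‖ξ‖) ^ M ≤ 2 ^ M * (1 + ‖ξ‖ ^ M) := by
      rcases le_total ‖ξ‖ 1 with h | h
      · calc (1 + ‖ξ‖) ^ M ≤ 2 ^ M := by gcongr; linarith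
          _ ≤ _ := le_mul_of_one_le_right (by positivity) (by linarith [pow_nonneg hx M])
      · calc (1 + ‖ξ‖) ^ M ≤ (2 * ‖ξ‖) ^ M := by gcongr; linarith
          _ = 2 ^ M * ‖ξ‖ ^ M := mul_pow _ _ _
          _ ≤ _ := by gcongr; linarith
    have h1 : A ≤ C₁ := by simpa using hC₁ ξ
    calc _ ≤ 2 ^ M * (1 + ‖ξ‖ ^ M) * A := by gcongr
      _ = 2 ^ M * (A + ‖ξ‖ ^ M * A) := by ring
      _ ≤ _ := by gcongr; exact hC₂ ξ
  have hd := norm_duhamelHat_le F ht ξ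
  rw [norm_of_nonneg (by positivity)]
  have hp : (0 : ℝ) < 1 + ‖ξ‖ := by positivity
  have hpow : ‖ξ‖ ^ (2 * γ) ≤ (1 + ‖ξ‖) ^ (-(n + 1 : ℝ)) * ((1 + ‖ξ‖) ^ M) ^ 2 := by
    calc ‖ξ‖ ^ (2 * γ) ≤ (1 + ‖ξ‖) ^ (2 * γ) := by gcongr; linarith
      _ ≤ (1 + ‖ξ‖) ^ (-(n + 1 : ℝ) + 2 * M) := by
        gcongr
        · linarith
        · linarith [(Nat.cast_nonneg n : (0 : ℝ) ≤ n)]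
      _ = _ := by
        rw [rpow_add hp, ← pow_mul, ← rpow_natCast]
        congr 2; push_cast; ring
  calc _ ≤ ((1 + ‖ξ‖) ^ (-(n + 1 : ℝ)) * ((1 + ‖ξ‖) ^ M) ^ 2) * (t * A) ^ 2 := by gcongr
    _ = (t * ((1 + ‖ξ‖) ^ M * A)) ^ 2 * (1 + ‖ξ‖) ^ (-(n + 1 : ℝ)) := by ring
    _ ≤ _ := by gcongr

theorem lintegral_sobolev_duhamelHat_le {n : ℕ} (F : 𝓢(ℝ × Euc n, ℂ)) {γ : ℝ} (hγ : 0 ≤ γ)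
    {t K : ℝ} (ht : 0 ≤ t) (hK : sobHat γ (fun ξ => duhamelHat (fun p => F p) t ξ) ≤ K) :
    ∫⁻ ξ : Euc n, ENNReal.ofReal (‖ξ‖ ^ (2 * γ) * ‖duhamelHat (fun p => F p) t ξ‖ ^ 2)
      ≤ ENNReal.ofReal (K ^ 2) := by
  have hnn : ∀ ξ : Euc n, 0 ≤ ‖ξ‖ ^ (2 * γ) * ‖duhamelHat (fun p => F p) t ξ‖ ^ 2 :=
    fun ξ => by positivity
  rw [← ofReal_integral_eq_lintegral_ofReal (integrable_sobolev_duhamelHat F hγ ht)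
    (Filter.Eventually.of_forall hnn)]
  apply ENNReal.ofReal_le_ofReal
  rw [sobHat, ← sqrt_eq_rpow] at hK
  exact (sqrt_le_left ((sqrt_nonneg _).trans hK)).1 hK

/-! ### Asymptotics of the Duhamel integral and averaging in time -/

open Filter Topology in
/-- After removing the oscillation in `k`, the Duhamel integrals at the times `k + h` and `k` differ
asymptotically by a multiple of the temporal Fourier transform at frequency `ρ`: the combination
below cancels the component at frequency `-ρ`. -/
theorem tendsto_norm_two_times (f : ℝ → ℂ) (hf : Integrable f) (hf0 : ∀ s < 0, f s = 0)
    (ρ h : ℝ) :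
    Tendsto (fun k : ℕ =>
      ‖Complex.exp (((h * ρ : ℝ) : ℂ) * Complex.I)
          * (∫ s in (0 : ℝ)..(k + h), (Real.sin ((k + h - s) * ρ) : ℂ) * f s)
        - ∫ s in (0 : ℝ)..k, (Real.sin ((k - s) * ρ) : ℂ) * f s‖ ^ 2) atTop
      (𝓝 ((1 - Real.cos (2 * h * ρ)) / 2
        * ‖∫ s : ℝ, Complex.exp (-Complex.I * ((s * ρ : ℝ) : ℂ)) * f s‖ ^ 2)) := by
  set P : ℝ → ℂ := fun s => Complex.exp (-Complex.I * ((s * ρ : ℝ) : ℂ)) * f s with hP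
  set Q : ℝ → ℂ := fun s => Complex.exp (Complex.I * ((s * ρ : ℝ) : ℂ)) * f s with hQ
  have hPi : Integrable P := by
    refine Integrable.bdd_mul (c := 1) hf (by fun_prop) (Eventually.of_forall fun s => ?_)
    rw [Complex.norm_exp]; simp
  have hQi : Integrable Q := by
    refine Integrable.bdd_mul (c := 1) hf (by fun_prop) (Eventually.of_forall fun s => ?_)
    rw [Complex.norm_exp]; simp
  have hk : Tendsto (fun k : ℕ => (k : ℝ)) atTop atTop := tendsto_natCast_atTop_atTop
  have hkh : Tendsto (fun k : ℕ => (k : ℝ) + h) atTop atTop :=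
    tendsto_atTop_add_const_right _ _ hk
  have hG : ∫ s in Set.Ioi (0 : ℝ), P s = ∫ s, P s := by
    rw [← integral_Ici_eq_integral_Ioi]
    refine setIntegral_eq_integral_of_forall_compl_eq_zero fun s hs => ?_
    simp only [Set.mem_Ici, not_le] at hs
    simp [hP, hf0 s hs]
  have hP1 := intervalIntegral_tendsto_integral_Ioi 0 hPi.integrableOn hk
  have hP2 := intervalIntegral_tendsto_integral_Ioi 0 hPi.integrableOn hkh
  have hQ1 := intervalIntegral_tendsto_integral_Ioi 0 hQi.integrableOn hk
  have hQ2 := intervalIntegral_tendsto_integral_Ioi 0 hQi.integrableOn hkh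
  rw [hG] at hP1 hP2
  have hduh : ∀ t : ℝ, ∫ s in (0 : ℝ)..t, (Real.sin ((t - s) * ρ) : ℂ) * f s
      = (Complex.exp (-((t * ρ : ℝ) : ℂ) * Complex.I) * (∫ s in (0 : ℝ)..t, Q s)
        - Complex.exp (((t * ρ : ℝ) : ℂ) * Complex.I) * ∫ s in (0 : ℝ)..t, P s)
          * (Complex.I / 2) := by
    intro t
    rw [← intervalIntegral.integral_const_mul, ← intervalIntegral.integral_const_mul,
      ← intervalIntegral.integral_sub (hQi.const_mul _).intervalIntegrable
        (hPi.const_mul _).intervalIntegrable, ← intervalIntegral.integral_mul_const]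
    congr 1
    funext s
    rw [Complex.ofReal_sin, Complex.sin]
    have e1 : Complex.exp (-((t * ρ : ℝ) : ℂ) * Complex.I)
        * Complex.exp (Complex.I * ((s * ρ : ℝ) : ℂ))
        = Complex.exp (-(((t - s) * ρ : ℝ) : ℂ) * Complex.I) := by
      rw [← Complex.exp_add]; congr 1; push_cast; ring
    have e2 : Complex.exp (((t * ρ : ℝ) : ℂ) * Complex.I)
        * Complex.exp (-Complex.I * ((s * ρ : ℝ) : ℂ))
        = Complex.exp ((((t - s) * ρ : ℝ) : ℂ) * Complex.I) := by
      rw [← Complex.exp_add]; congr 1; push_cast; ring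
    simp only [hP, hQ]
    linear_combination (-(Complex.I / 2) * f s) * e1 + ((Complex.I / 2) * f s) * e2
  have hcancel : ∀ k : ℕ,
      ‖Complex.exp (((h * ρ : ℝ) : ℂ) * Complex.I)
          * (∫ s in (0 : ℝ)..(k + h), (Real.sin ((k + h - s) * ρ) : ℂ) * f s)
        - ∫ s in (0 : ℝ)..k, (Real.sin ((k - s) * ρ) : ℂ) * f s‖
      = ‖(Complex.exp (-((2 * k * ρ : ℝ) : ℂ) * Complex.I)
          * ((∫ s in (0 : ℝ)..(k + h), Q s) - ∫ s in (0 : ℝ)..k, Q s)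
        - (Complex.exp (((2 * h * ρ : ℝ) : ℂ) * Complex.I) * (∫ s in (0 : ℝ)..(k + h), P s)
          - ∫ s in (0 : ℝ)..k, P s)) * (Complex.I / 2)‖ := by
    intro k
    rw [hduh, hduh]
    -- Multiplying by the unimodular factor `e^{ikρ}` does not change the norm on the right.
    have hu : ‖Complex.exp (((k * ρ : ℝ) : ℂ) * Complex.I)‖ = 1 :=
      Complex.norm_exp_ofReal_mul_I _
    conv_rhs => rw [← one_mul ‖_‖, ← hu, ← norm_mul]
    congr 1
    set a := ∫ s in (0 : ℝ)..(k + h), Q s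
    set b := ∫ s in (0 : ℝ)..k, Q s
    set c := ∫ s in (0 : ℝ)..(k + h), P s
    set d := ∫ s in (0 : ℝ)..k, P s
    have e1 : Complex.exp (((h * ρ : ℝ) : ℂ) * Complex.I)
        * Complex.exp (-(((k + h) * ρ : ℝ) : ℂ) * Complex.I)
        = Complex.exp (-((k * ρ : ℝ) : ℂ) * Complex.I) := by
      rw [← Complex.exp_add]; congr 1; push_cast; ring
    have e2 : Complex.exp (((h * ρ : ℝ) : ℂ) * Complex.I)
        * Complex.exp ((((k + h) * ρ : ℝ) : ℂ) * Complex.I)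
        = Complex.exp (((k * ρ : ℝ) : ℂ) * Complex.I)
          * Complex.exp (((2 * h * ρ : ℝ) : ℂ) * Complex.I) := by
      rw [← Complex.exp_add, ← Complex.exp_add]; congr 1; push_cast; ring
    have e3 : Complex.exp (((k * ρ : ℝ) : ℂ) * Complex.I)
        * Complex.exp (-((2 * k * ρ : ℝ) : ℂ) * Complex.I)
        = Complex.exp (-((k * ρ : ℝ) : ℂ) * Complex.I) := by
      rw [← Complex.exp_add]; congr 1; push_cast; ring
    linear_combination (Complex.I / 2) * (a * e1 - c * e2 - (a - b) * e3)
  have hosc : Tendsto (fun k : ℕ => Complex.exp (-((2 * k * ρ : ℝ) : ℂ) * Complex.I)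
      * ((∫ s in (0 : ℝ)..(k + h), Q s) - ∫ s in (0 : ℝ)..k, Q s)) atTop (𝓝 0) := by
    have h0 := hQ2.sub hQ1
    rw [sub_self] at h0
    rw [tendsto_zero_iff_norm_tendsto_zero] at h0 ⊢
    refine h0.congr fun k => ?_
    rw [norm_mul, ← Complex.ofReal_neg, Complex.norm_exp_ofReal_mul_I, one_mul]
  have hlim := ((hosc.sub ((hP2.const_mul
    (Complex.exp (((2 * h * ρ : ℝ) : ℂ) * Complex.I))).sub hP1)).mul_const
      (Complex.I / 2)).norm.pow 2
  simp only [hcancel]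
  convert hlim using 2
  have hsq : ‖Complex.exp (((2 * h * ρ : ℝ) : ℂ) * Complex.I) - 1‖ ^ 2
      = 2 - 2 * Real.cos (2 * h * ρ) := by
    rw [← Complex.normSq_eq_norm_sq, Complex.normSq_apply]
    simp only [Complex.sub_re, Complex.sub_im, Complex.exp_ofReal_mul_I_re,
      Complex.exp_ofReal_mul_I_im, Complex.one_re, Complex.one_im]
    linear_combination Real.sin_sq_add_cos_sq (2 * h * ρ)
  have hfac : ∀ z : ℂ, (0 - (Complex.exp (((2 * h * ρ : ℝ) : ℂ) * Complex.I) * z - z))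
      * (Complex.I / 2)
      = (Complex.exp (((2 * h * ρ : ℝ) : ℂ) * Complex.I) - 1) * z * (-Complex.I / 2) :=
    fun z => by ring
  rw [hfac, norm_mul, norm_mul, mul_pow, mul_pow, hsq]
  simp
  ring

theorem ae_ne_zero {n : ℕ} (hn : 2 ≤ n) : ∀ᵐ ξ : Euc n, ξ ≠ 0 := by
  have : Nonempty (Fin n) := ⟨⟨0, by omega⟩⟩
  exact compl_mem_ae_iff.2 (measure_singleton 0)

open Filter Topology in
/-- The energy bound at the times `k` and `k + h`, passed to the limit `k → ∞` by Fatou's lemma. -/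
theorem lintegral_two_times_le {n : ℕ} (hn : 2 ≤ n) (F : 𝓢(ℝ × Euc n, ℂ))
    (hF : ∀ t < (0 : ℝ), ∀ x, F (t, x) = 0) {γ : ℝ} (hγ : 0 ≤ γ) {K : ℝ}
    (hK : ∀ t, sobHat γ (fun ξ => duhamelHat (fun p => F p) t ξ) ≤ K) {h : ℝ} (hh : 0 ≤ h) :
    ∫⁻ η : Euc n, ENNReal.ofReal ((1 - Real.cos (2 * h * ‖η‖)) / 2
        * (‖η‖ ^ (2 * γ - 2) * ‖spacetimeFT (fun p => F p) ‖η‖ η‖ ^ 2))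
      ≤ ENNReal.ofReal (4 * K ^ 2) := by
  set w : ℝ → Euc n → ℂ := fun t ξ => duhamelHat (fun p => F p) t ξ with hw
  set u : ℕ → Euc n → ENNReal := fun k ξ => ENNReal.ofReal (‖ξ‖ ^ (2 * γ) *
    ‖Complex.exp (((h * ‖ξ‖ : ℝ) : ℂ) * Complex.I) * w (k + h) ξ - w k ξ‖ ^ 2) with hu
  have hwm : ∀ t, 0 ≤ t → Measurable (w t) :=
    fun t ht => (stronglyMeasurable_duhamelHat F ht).measurable
  have hum : ∀ k, Measurable (u k) := by
    intro k
    have h1 := hwm (k + h) (by positivity)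
    have h2 := hwm k (by positivity)
    fun_prop
  have hub : ∀ k, ∫⁻ ξ, u k ξ ≤ ENNReal.ofReal (4 * K ^ 2) := by
    intro k
    have h1 := lintegral_sobolev_duhamelHat_le F hγ (t := k + h) (by positivity) (hK _)
    have h2 := lintegral_sobolev_duhamelHat_le F hγ (t := k) (by positivity) (hK _)
    have hm := hwm k (by positivity)
    calc ∫⁻ ξ, u k ξ
        ≤ ∫⁻ ξ, (2 * ENNReal.ofReal (‖ξ‖ ^ (2 * γ) * ‖w (k + h) ξ‖ ^ 2)
            + 2 * ENNReal.ofReal (‖ξ‖ ^ (2 * γ) * ‖w k ξ‖ ^ 2)) := by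
          refine lintegral_mono fun ξ => ?_
          have h2' : ∀ x : ℝ, 2 * ENNReal.ofReal x = ENNReal.ofReal (2 * x) := fun x => by
            rw [ENNReal.ofReal_mul zero_le_two]; simp
          rw [h2', h2', ← ENNReal.ofReal_add (by positivity) (by positivity)]
          apply ENNReal.ofReal_le_ofReal
          have htri : ‖Complex.exp (((h * ‖ξ‖ : ℝ) : ℂ) * Complex.I) * w (k + h) ξ - w k ξ‖
              ≤ ‖w (k + h) ξ‖ + ‖w k ξ‖ := by
            refine (norm_sub_le _ _).trans ?_
            rw [norm_mul, Complex.norm_exp_ofReal_mul_I, one_mul]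
          calc _ ≤ ‖ξ‖ ^ (2 * γ) * (‖w (k + h) ξ‖ + ‖w k ξ‖) ^ 2 := by gcongr
            _ ≤ ‖ξ‖ ^ (2 * γ) * (2 * (‖w (k + h) ξ‖ ^ 2 + ‖w k ξ‖ ^ 2)) := by
              gcongr; exact add_sq_le
            _ = _ := by ring
      _ = 2 * (∫⁻ ξ, ENNReal.ofReal (‖ξ‖ ^ (2 * γ) * ‖w (k + h) ξ‖ ^ 2))
            + 2 * ∫⁻ ξ, ENNReal.ofReal (‖ξ‖ ^ (2 * γ) * ‖w k ξ‖ ^ 2) := by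
          rw [lintegral_add_right _ (by fun_prop), lintegral_const_mul' _ _ (by simp),
            lintegral_const_mul' _ _ (by simp)]
      _ ≤ 2 * ENNReal.ofReal (K ^ 2) + 2 * ENNReal.ofReal (K ^ 2) := by gcongr
      _ = ENNReal.ofReal (4 * K ^ 2) := by
          rw [ENNReal.ofReal_mul (by norm_num), ← add_mul]
          norm_num
  have hlim : ∀ᵐ ξ : Euc n, Tendsto (fun k => u k ξ) atTop
      (𝓝 (ENNReal.ofReal ((1 - Real.cos (2 * h * ‖ξ‖)) / 2
        * (‖ξ‖ ^ (2 * γ - 2) * ‖spacetimeFT (fun p => F p) ‖ξ‖ ξ‖ ^ 2)))) := by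
    filter_upwards [ae_ne_zero hn] with ξ hξ
    have hρ : 0 < ‖ξ‖ := norm_pos_iff.2 hξ
    have hρ' : (‖ξ‖ : ℂ) ≠ 0 := by exact_mod_cast hρ.ne'
    have hlim := tendsto_norm_two_times (fun s => spatialFT (fun p => F p) s ξ)
      (integrable_spatialFT F ξ) (fun s hs => by simp [spatialFT, hF s hs]) ‖ξ‖ h
    have hwa : ∀ t, w t ξ = (‖ξ‖ : ℂ)⁻¹ * ∫ s in (0 : ℝ)..t,
        (Real.sin ((t - s) * ‖ξ‖) : ℂ) * spatialFT (fun p => F p) s ξ := by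
      intro t
      rw [hw, ← intervalIntegral.integral_const_mul]
      simp only [duhamelHat]
      congr 1
      funext s
      push_cast
      ring
    have hpow : ‖ξ‖ ^ (2 * γ - 2) = ‖ξ‖ ^ (2 * γ) * (‖ξ‖⁻¹) ^ 2 := by
      rw [rpow_sub hρ, inv_pow, div_eq_mul_inv]; norm_num
    refine (ENNReal.continuous_ofReal.tendsto _).comp ?_
    have := hlim.const_mul (‖ξ‖ ^ (2 * γ - 2))
    convert this using 2 with k
    · rw [hwa, hwa, hpow, ← mul_assoc, mul_comm _ ((‖ξ‖ : ℂ)⁻¹), mul_assoc, ← mul_sub, norm_mul,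
        mul_pow, norm_inv, Complex.norm_real, norm_norm, mul_assoc]
    · rw [spacetimeFT]; ring
  calc _ = ∫⁻ ξ, liminf (fun k => u k ξ) atTop :=
        lintegral_congr_ae (hlim.mono fun ξ hξ => hξ.liminf_eq.symm)
    _ ≤ liminf (fun k => ∫⁻ ξ, u k ξ) atTop := lintegral_liminf_le hum
    _ ≤ _ := liminf_le_of_frequently_le' (Frequently.of_forall hub)

open Filter Topology in
/-- The weights `(1 - cos (2 h ‖η‖)) / 2` have mean `1 / 2` in `h`, so a bound for the weighted
integrals of `W` that is uniform in `h` bounds the unweighted integral. -/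
theorem lintegral_le_of_oscillating {n : ℕ} (hn : 2 ≤ n) (W : Euc n → ℝ) (hWm : Measurable W)
    (hW0 : ∀ η, 0 ≤ W η) (B : ENNReal)
    (hB : ∀ h : ℝ, 0 ≤ h →
      ∫⁻ η, ENNReal.ofReal ((1 - Real.cos (2 * h * ‖η‖)) / 2 * W η) ≤ B) :
    ∫⁻ η, ENNReal.ofReal (1 / 2 * W η) ≤ B := by
  set m : ℕ → Euc n → ℝ := fun k η =>
    ∫ h in (0 : ℝ)..1, (1 - Real.cos (2 * (k * h) * ‖η‖)) / 2 with hm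
  have hmean : ∀ k : ℕ, ∀ η : Euc n, ∫⁻ h in Set.Ioc (0 : ℝ) 1,
      ENNReal.ofReal ((1 - Real.cos (2 * (k * h) * ‖η‖)) / 2 * W η)
      = ENNReal.ofReal (m k η * W η) := by
    intro k η
    simp only [hm]
    rw [intervalIntegral.integral_of_le zero_le_one, ← integral_mul_const,
      ofReal_integral_eq_lintegral_ofReal]
    · exact (Continuous.integrableOn_Icc (by fun_prop)).mono_set Set.Ioc_subset_Icc_self
    · exact Eventually.of_forall fun h => mul_nonneg
        (by linarith [Real.cos_le_one (2 * (k * h) * ‖η‖)]) (hW0 η)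
  have hjoint : ∀ k : ℕ, Measurable (Function.uncurry fun (h : ℝ) (η : Euc n) =>
      ENNReal.ofReal ((1 - Real.cos (2 * (k * h) * ‖η‖)) / 2 * W η)) := by
    intro k
    simp only [Function.uncurry_def]
    fun_prop
  have hmB : ∀ k : ℕ, ∫⁻ η, ENNReal.ofReal (m k η * W η) ≤ B := by
    intro k
    simp only [← hmean]
    rw [← lintegral_lintegral_swap (hjoint k).aemeasurable]
    calc _ ≤ ∫⁻ _ in Set.Ioc (0 : ℝ) 1, B :=
          setLIntegral_mono measurable_const fun h hh => hB _ (mul_nonneg (by positivity) hh.1.le)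
      _ = B := by simp
  have hmm : ∀ k : ℕ, Measurable fun η => ENNReal.ofReal (m k η * W η) := by
    intro k
    simp only [← hmean]
    exact (hjoint k).lintegral_prod_left
  have hlim : ∀ᵐ η : Euc n, Tendsto (fun k => ENNReal.ofReal (m k η * W η)) atTop
      (𝓝 (ENNReal.ofReal (1 / 2 * W η))) := by
    filter_upwards [ae_ne_zero hn] with η hη
    have hρ : 0 < ‖η‖ := norm_pos_iff.2 hη
    refine (ENNReal.continuous_ofReal.tendsto _).comp (Tendsto.mul_const _ ?_)
    have hval : ∀ k : ℕ, k ≠ 0 →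
        m k η = 1 / 2 - Real.sin (2 * ‖η‖ * k) * (4 * ‖η‖)⁻¹ / k := by
      intro k hk
      have hk' : (k : ℝ) ≠ 0 := by exact_mod_cast hk
      have hc : 2 * ‖η‖ * k ≠ 0 := by positivity
      have hcos : ∫ h in (0 : ℝ)..1, Real.cos (2 * (k * h) * ‖η‖)
          = (2 * ‖η‖ * k)⁻¹ * Real.sin (2 * ‖η‖ * k) := by
        have e : ∀ h : ℝ, Real.cos (2 * (k * h) * ‖η‖) = Real.cos (2 * ‖η‖ * k * h) := by
          intro h; congr 1; ring
        simp only [e]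
        rw [intervalIntegral.integral_comp_mul_left (fun x => Real.cos x) hc]
        simp
      simp only [hm]
      rw [intervalIntegral.integral_div, intervalIntegral.integral_sub (by simp)
        (Continuous.intervalIntegrable (by fun_prop) _ _), hcos]
      simp
      field_simp
      ring
    have hz : Tendsto (fun k : ℕ => Real.sin (2 * ‖η‖ * k) * (4 * ‖η‖)⁻¹ / k) atTop (𝓝 0) := by
      refine squeeze_zero_norm (fun k => ?_)
        (tendsto_const_div_atTop_nhds_zero_nat ((4 * ‖η‖)⁻¹))
      rw [norm_div, norm_mul, Real.norm_natCast, norm_eq_abs, norm_of_nonneg (by positivity)]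
      gcongr
      exact mul_le_of_le_one_left (by positivity) (abs_sin_le_one _)
    have := hz.const_sub (1 / 2)
    rw [sub_zero] at this
    refine this.congr' ?_
    filter_upwards [eventually_ne_atTop 0] with k hk
    exact (hval k hk).symm
  calc _ = ∫⁻ η, liminf (fun k => ENNReal.ofReal (m k η * W η)) atTop :=
        lintegral_congr_ae (hlim.mono fun η hη => hη.liminf_eq.symm)
    _ ≤ liminf (fun k => ∫⁻ η, ENNReal.ofReal (m k η * W η)) atTop := lintegral_liminf_le hmm
    _ ≤ _ := liminf_le_of_frequently_le' (Frequently.of_forall hmB)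

/-- The restriction-to-the-light-cone bound (4.4), conditional on the energy
part of the global Minkowski Strichartz estimate. -/
theorem lightcone_restriction_bound {n : ℕ} (hn : 2 ≤ n)
    {γ : ℝ} (hγ0 : 0 ≤ γ) (hγ1 : γ ≤ ((n : ℝ) - 1) / 2)
    (r s : ℝ) (hr1 : 1 ≤ r) (hr2 : r ≤ 2) (hs1 : 1 ≤ s) (hs2 : s ≤ 2)
    (C₀ : ℝ)
    (hEnergy : ∀ F : 𝓢(ℝ × Euc n, ℂ), (∀ t < (0 : ℝ), ∀ x, F (t, x) = 0) →
      ∀ t : ℝ,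
        sobHat γ (fun ξ => duhamelHat (fun p => F p) t ξ)
            + sobHat (γ - 1)
                (fun ξ => deriv (fun t' => duhamelHat (fun p => F p) t' ξ) t)
          ≤ C₀ * LrLsNorm (fun p => F p) r s) :
    ∃ C : ℝ, 0 < C ∧ ∀ F : 𝓢(ℝ × Euc n, ℂ), (∀ t < (0 : ℝ), ∀ x, F (t, x) = 0) →
      (∫ η, ‖η‖ ^ (2 * γ - 2) * ‖spacetimeFT (fun p => F p) ‖η‖ η‖ ^ 2)
        ≤ C * C₀ ^ 2 * (LrLsNorm (fun p => F p) r s) ^ 2 := by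
  refine ⟨8, by norm_num, fun F hF => ?_⟩
  set K := C₀ * LrLsNorm (fun p => F p) r s with hKdef
  have hK : ∀ t, sobHat γ (fun ξ => duhamelHat (fun p => F p) t ξ) ≤ K := by
    intro t
    have h1 := hEnergy F hF t
    have h2 : 0 ≤ sobHat (γ - 1)
        (fun ξ => deriv (fun t' => duhamelHat (fun p => F p) t' ξ) t) :=
      rpow_nonneg (integral_nonneg fun ξ => by positivity) _
    linarith
  set W : Euc n → ℝ := fun η =>
    ‖η‖ ^ (2 * γ - 2) * ‖spacetimeFT (fun p => F p) ‖η‖ η‖ ^ 2 with hW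
  have hWm : Measurable W := by
    have := (stronglyMeasurable_spacetimeFT F).measurable
    fun_prop
  have hW0 : ∀ η, 0 ≤ W η := fun η => by positivity
  have hB := lintegral_le_of_oscillating hn W hWm hW0 _
    fun h hh => lintegral_two_times_le hn F hF hγ0 hK hh
  have hhalf : ∫ η, 1 / 2 * W η ≤ 4 * K ^ 2 := by
    rw [integral_eq_lintegral_of_nonneg_ae
      (Filter.Eventually.of_forall fun η => by have := hW0 η; positivity)
      (by fun_prop)]
    exact ENNReal.toReal_le_of_le_ofReal (by positivity) hB
  rw [integral_const_mul] at hhalf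
  have hrhs : 8 * C₀ ^ 2 * LrLsNorm (fun p => F p) r s ^ 2 = 8 * K ^ 2 := by
    rw [hKdef]; ring
  rw [hrhs]
  linarith
end
end
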